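/- Any permutation class C with finitely many sum-indecomposable permutations whose growth rate is greater than 1 (i.e., whose dominant growth rate γ satisfies γ > 1) exhibits a Wilf collapse. -/

import Mathlib

open Filter Asymptotics

/-- A (finite) permutation: a size `n` together with a bijection of `Fin n`,
thought of in one-line notation as the sequence `π 0, π 1, …, π (n-1)`. -/
abbrev PPerm : Type := Σ n : ℕ, Equiv.Perm (Fin n)

/-- Pattern containment: `π ≤ τ` iff `τ` has a subsequence (a strictly increasing choice
of positions) whose entries are in the same relative order as `π`. -/
def PatternLE (π τ : PPerm) : Prop :=
  ∃ g : Fin π.1 → Fin τ.1, StrictMono g ∧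
    ∀ i j : Fin π.1, π.2 i < π.2 j ↔ τ.2 (g i) < τ.2 (g j)

/-- A permutation class: a set of permutations closed downward under containment. -/
def IsPermClass (C : Set PPerm) : Prop :=
  ∀ π τ : PPerm, PatternLE π τ → τ ∈ C → π ∈ C

/-- `cnt C n` is the number `c_n` of permutations of size `n` in `C`. -/
noncomputable def cnt (C : Set PPerm) (n : ℕ) : ℕ :=
  Set.ncard {τ : PPerm | τ ∈ C ∧ τ.1 = n}

/-- The number of permutations of size `n` in `C` avoiding `α`. -/
noncomputable def avcnt (C : Set PPerm) (α : PPerm) (n : ℕ) : ℕ :=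
  Set.ncard {τ : PPerm | τ ∈ C ∧ τ.1 = n ∧ ¬ PatternLE α τ}

/-- `α` and `β` are Wilf-equivalent in `C`: for every `n`, `C` has as many size-`n`
permutations avoiding `α` as avoiding `β`. -/
def WilfEq (C : Set PPerm) (α β : PPerm) : Prop := ∀ n : ℕ, avcnt C α n = avcnt C β n

/-- `wilfcnt C n` is the number `w_n` of Wilf(-equivalence) classes formed by the
size-`n` permutations of `C`. -/
noncomputable def wilfcnt (C : Set PPerm) (n : ℕ) : ℕ :=
  Set.ncard {S : Set PPerm | ∃ α : PPerm, α ∈ C ∧ α.1 = n ∧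
    S = {β : PPerm | β ∈ C ∧ β.1 = n ∧ WilfEq C α β}}

/-- `C` has a *Wilf collapse* if `w_n = o(c_n)`. -/
def WilfCollapse (C : Set PPerm) : Prop :=
  (fun n => (wilfcnt C n : ℝ)) =o[atTop] fun n => (cnt C n : ℝ)

/-- `C` has an *exponential Wilf collapse* if `w_n = o(rⁿ·c_n)` for some `r < 1`. -/
def ExpWilfCollapse (C : Set PPerm) : Prop :=
  ∃ r : ℝ, r < 1 ∧
    (fun n => (wilfcnt C n : ℝ)) =o[atTop] fun n => r ^ n * (cnt C n : ℝ)

/-- The (direct) sum `α ⊕ β` of two permutations: `β` is placed above and to the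
right of `α`. -/
def psum (α β : PPerm) : PPerm :=
  ⟨α.1 + β.1, (finSumFinEquiv.symm.trans ((Equiv.sumCongr α.2 β.2).trans finSumFinEquiv))⟩

/-- A permutation is *sum-indecomposable* if it is nonempty and is not the sum of two
nonempty permutations. -/
def SumIndec (π : PPerm) : Prop :=
  0 < π.1 ∧ ¬ ∃ α β : PPerm, 0 < α.1 ∧ 0 < β.1 ∧ π = psum α β

/-- A set of permutations is *sum-closed* if it is closed under `⊕`. -/
def SumClosed (C : Set PPerm) : Prop :=
  ∀ α β : PPerm, α ∈ C → β ∈ C → psum α β ∈ C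

/-!
A permutation of `C` is a word over the sum-indecomposables of `C`. The words that may be read after
a given prefix form a lower language, the state of the prefix; by Higman's lemma only finitely often
can a state be left for a smaller one, and in between the word runs over the loop alphabet of the
state. At `g = γ⁻¹` the heaviest loop alphabets have weight `∑ g ^ sz = 1`, and the polynomial
factor `n ^ (D - 1)` in the count forces almost every word of size `n` to run through `D` such
states. In each of them it then contains, all but negligibly often, a prescribed block of loops.

The block is built from two letters whose occurrences can be moved past each other without changing
how often the word occurs, so each typical word has `K + 1` Wilf-equivalent companions of its size.
Hence `w_n ≤ o(c_n) + c_n / (K + 1)` for every `K`.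
-/

/-! ### Word orders and lower languages -/

/-- A containment order on the words over `Λ`, modelled on the containment of sums of
sum-indecomposable permutations: letters have sizes, an embedding into a word distributes the
contained word over the letters, and all nonempty words contain the only letter of size `1`. -/
structure WordOrder (Λ : Type*) where
  sz : Λ → ℕ
  le : List Λ → List Λ → Prop
  le_refl : ∀ a, le a a
  le_trans : ∀ {a b c}, le a b → le b c → le a c
  nil_le : ∀ a, le [] a
  le_cons_iff : ∀ {a x t}, le a (x :: t) ↔ ∃ a₁ a₂, a = a₁ ++ a₂ ∧ le a₁ [x] ∧ le a₂ t
  sum_sz_le : ∀ {a b}, le a b → (a.map sz).sum ≤ (b.map sz).sum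
  eq_of_sum_sz_eq : ∀ {a b}, le a b → (a.map sz).sum = (b.map sz).sum → a = b
  exists_unit_le : ∀ x, ∃ o, sz o = 1 ∧ le [o] [x]
  unit_unique : ∀ {o o'}, sz o = 1 → sz o' = 1 → o = o'

/-- The word `R` repeated `n` times. -/
def wordPow {Λ : Type*} (R : List Λ) (n : ℕ) : List Λ := (List.replicate n R).flatten

section Words

variable {Λ : Type*}

lemma wordPow_add (R : List Λ) (m n : ℕ) :
    wordPow R (m + n) = wordPow R m ++ wordPow R n := by
  rw [wordPow, List.replicate_add, List.flatten_append, ← wordPow, ← wordPow]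

lemma wordPow_one_add (R : List Λ) (n : ℕ) : wordPow R (1 + n) = R ++ wordPow R n := by
  simp [wordPow, Nat.add_comm 1, List.replicate_succ]

lemma mem_of_mem_wordPow {R : List Λ} {n : ℕ} {a : Λ} (h : a ∈ wordPow R n) : a ∈ R := by
  obtain ⟨_, hl, ha⟩ := List.mem_flatten.1 h
  exact List.eq_of_mem_replicate hl ▸ ha

lemma le_length_wordPow {R : List Λ} (hR : R ≠ []) (n : ℕ) : n ≤ (wordPow R n).length := by
  simpa [wordPow] using Nat.le_mul_of_pos_right n (List.length_pos_of_ne_nil hR)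

lemma exists_of_append_eq_append {a b c d : List Λ} (h : a ++ b = c ++ d)
    (hl : c.length ≤ a.length) : ∃ z, a = c ++ z ∧ d = z ++ b := by
  obtain ⟨z, rfl⟩ := List.prefix_of_prefix_length_le (List.prefix_append c d)
    (h ▸ List.prefix_append a b) hl
  exact ⟨z, rfl, by simpa using h.symm⟩

lemma exists_cons_of_append_eq_append {a b c d : List Λ} (h : a ++ b = c ++ d)
    (hl : c.length < a.length) : ∃ x z, a = c ++ x :: z ∧ d = x :: (z ++ b) := by
  obtain ⟨_ | ⟨x, z⟩, rfl, rfl⟩ := exists_of_append_eq_append h hl.le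
  · simp at hl
  · exact ⟨x, z, rfl, rfl⟩

lemma forall_mem_or_exists_first_notMem (L : Finset Λ) (w : List Λ) :
    (∀ a ∈ w, a ∈ L) ∨ ∃ t y w', w = t ++ y :: w' ∧ (∀ a ∈ t, a ∈ L) ∧ y ∉ L := by
  induction w with
  | nil => simp
  | cons x w ih =>
    by_cases hx : x ∈ L
    · refine ih.imp (fun h ↦ by simpa [hx] using h) ?_
      rintro ⟨t, y, w', rfl, ht, hy⟩
      exact ⟨x :: t, y, w', rfl, by simpa [hx] using ht, hy⟩
    · exact .inr ⟨[], x, w, rfl, by simp, hx⟩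

end Words

namespace WordOrder

section Basic

variable {Λ : Type*} (W : WordOrder Λ)

/-- The size of a word, i.e. the size of the sum it stands for. -/
def size (w : List Λ) : ℕ := (w.map W.sz).sum

@[simp] lemma size_nil : W.size [] = 0 := rfl

@[simp] lemma size_cons (x : Λ) (w : List Λ) : W.size (x :: w) = W.sz x + W.size w := by
  simp [size]

@[simp] lemma size_append (a b : List Λ) : W.size (a ++ b) = W.size a + W.size b := by
  simp [size]

lemma size_le {a b : List Λ} (h : W.le a b) : W.size a ≤ W.size b := W.sum_sz_le h

lemma sz_pos (x : Λ) : 0 < W.sz x := by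
  obtain ⟨o, ho, hox⟩ := W.exists_unit_le x
  simpa [ho, Nat.one_le_iff_ne_zero, Nat.pos_iff_ne_zero] using W.size_le hox

lemma length_le_size (w : List Λ) : w.length ≤ W.size w := by
  induction w with
  | nil => simp
  | cons x w ih =>
    have := W.sz_pos x
    simp only [List.length_cons, size_cons]
    lia

lemma eq_nil_of_le_nil {a : List Λ} (h : W.le a []) : a = [] :=
  List.length_eq_zero_iff.1 (Nat.le_zero.1 ((W.length_le_size a).trans (W.size_le h)))

lemma append_le_append {a b c d : List Λ} (hab : W.le a b) (hcd : W.le c d) :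
    W.le (a ++ c) (b ++ d) := by
  induction b generalizing a with
  | nil => simpa [W.eq_nil_of_le_nil hab] using hcd
  | cons x b ih =>
    obtain ⟨a₁, a₂, rfl, h₁, h₂⟩ := W.le_cons_iff.1 hab
    exact W.le_cons_iff.2 ⟨a₁, a₂ ++ c, by simp, h₁, ih h₂⟩

lemma exists_of_le_append {a s t : List Λ} (h : W.le a (s ++ t)) :
    ∃ a₁ a₂, a = a₁ ++ a₂ ∧ W.le a₁ s ∧ W.le a₂ t := by
  induction s generalizing a with
  | nil => exact ⟨[], a, rfl, W.le_refl _, h⟩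
  | cons x s ih =>
    obtain ⟨a₁, a₂, rfl, h₁, h₂⟩ := W.le_cons_iff.1 h
    obtain ⟨b₁, b₂, rfl, h₃, h₄⟩ := ih h₂
    exact ⟨a₁ ++ b₁, b₂, by simp, W.le_cons_iff.2 ⟨a₁, b₁, rfl, h₁, h₃⟩, h₄⟩

lemma exists_of_le_append_cons {a s t : List Λ} {y : Λ} (h : W.le a (s ++ y :: t)) :
    ∃ a₁ b a₂, a = a₁ ++ (b ++ a₂) ∧ W.le a₁ s ∧ W.le b [y] ∧ W.le a₂ t := by
  obtain ⟨a₁, a', rfl, h₁, h'⟩ := W.exists_of_le_append h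
  obtain ⟨b, a₂, rfl, hb, h₂⟩ := W.le_cons_iff.1 h'
  exact ⟨a₁, b, a₂, rfl, h₁, hb, h₂⟩

lemma le_of_sublist {a b : List Λ} (h : a.Sublist b) : W.le a b := by
  induction h with
  | slnil => exact W.le_refl _
  | cons x _ ih => exact W.append_le_append (W.nil_le [x]) ih
  | cons_cons x _ ih => exact W.append_le_append (W.le_refl [x]) ih

lemma le_append_right {a b : List Λ} (c : List Λ) (h : W.le a b) : W.le a (b ++ c) :=
  W.le_trans h (W.le_of_sublist (List.sublist_append_left _ _))

lemma le_append_left {a b : List Λ} (c : List Λ) (h : W.le a b) : W.le a (c ++ b) :=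
  W.le_trans h (W.le_of_sublist (List.sublist_append_right _ _))

variable [Fintype Λ]

/-- The largest size of a letter. -/
def maxSize : ℕ := Finset.univ.sup W.sz

lemma length_le_maxSize {b : List Λ} {x : Λ} (h : W.le b [x]) : b.length ≤ W.maxSize :=
  calc b.length ≤ W.size b := W.length_le_size b
    _ ≤ W.sz x := by simpa using W.size_le h
    _ ≤ W.maxSize := Finset.le_sup (Finset.mem_univ x)

lemma exists_cut {a₁ a₂ t : List Λ} (h : W.le (a₁ ++ a₂) t) :
    ∃ t₁ t₂ b a₃, t = t₁ ++ t₂ ∧ a₂ = b ++ a₃ ∧ b.length ≤ W.maxSize ∧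
      W.le (a₁ ++ b) t₁ ∧ W.le a₃ t₂ := by
  induction t generalizing a₁ with
  | nil =>
    obtain ⟨rfl, rfl⟩ := List.append_eq_nil_iff.1 (W.eq_nil_of_le_nil h)
    exact ⟨[], [], [], [], rfl, rfl, by simp, h, h⟩
  | cons x t ih =>
    obtain ⟨c₁, c₂, hc, h₁, h₂⟩ := W.le_cons_iff.1 h
    rcases List.append_eq_append_iff.1 hc with ⟨b, rfl, rfl⟩ | ⟨b, rfl, rfl⟩
    · have := W.length_le_maxSize h₁
      exact ⟨[x], t, b, c₂, rfl, rfl, by grind, h₁, h₂⟩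
    · obtain ⟨t₁, t₂, b', a₃, rfl, rfl, hb', h₃, h₄⟩ := ih h₂
      exact ⟨x :: t₁, t₂, b', a₃, rfl, rfl, hb', by
        simpa using W.append_le_append h₁ h₃, h₄⟩

end Basic

/-- The languages that are closed downward under the containment order. -/
def IsLower {Λ : Type*} (W : WordOrder Λ) (S : Language Λ) : Prop :=
  ∀ ⦃a b : List Λ⦄, W.le a b → b ∈ S → a ∈ S

end WordOrder

namespace WordOrder.IsLower

variable {Λ : Type*} {W : WordOrder Λ} {S : Language Λ}

lemma leftQuotient (hS : W.IsLower S) (u : List Λ) : W.IsLower (S.leftQuotient u) :=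
  fun _ _ hab hb ↦ hS (W.append_le_append (W.le_refl u) hab) hb

lemma nil_mem (hS : W.IsLower S) {w : List Λ} (hw : w ∈ S) : [] ∈ S := hS (W.nil_le w) hw

lemma leftQuotient_anti (hS : W.IsLower S) {u v : List Λ} (huv : W.le u v) :
    S.leftQuotient v ≤ S.leftQuotient u :=
  fun w hw ↦ hS (W.append_le_append huv (W.le_refl w)) hw

lemma leftQuotient_le (hS : W.IsLower S) (u : List Λ) : S.leftQuotient u ≤ S :=
  hS.leftQuotient_anti (W.nil_le u)

end WordOrder.IsLower

open Classical in
/-- The loop alphabet of the prefix state `S`: the letters that lead from `S` back to `S`. A state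
is encoded as the language of the words that may still be read. -/
noncomputable def loops {Λ : Type*} [Fintype Λ] (S : Language Λ) : Finset Λ :=
  Finset.univ.filter fun x ↦ S.leftQuotient [x] = S

section Loops

variable {Λ : Type*} [Fintype Λ] {S : Language Λ}

lemma mem_loops {x : Λ} : x ∈ loops S ↔ S.leftQuotient [x] = S := by
  simp [loops]

lemma leftQuotient_eq_self {t : List Λ} (ht : ∀ a ∈ t, a ∈ loops S) : S.leftQuotient t = S := by
  induction t with
  | nil => rfl
  | cons x t ih =>
    rw [List.forall_mem_cons] at ht
    rw [← List.singleton_append, Language.leftQuotient_append, mem_loops.1 ht.1, ih ht.2]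

lemma append_mem_iff {t w : List Λ} (ht : ∀ a ∈ t, a ∈ loops S) : t ++ w ∈ S ↔ w ∈ S := by
  rw [← Language.mem_leftQuotient, leftQuotient_eq_self ht]

lemma leftQuotient_append_cons {t : List Λ} (ht : ∀ a ∈ t, a ∈ loops S) (x : Λ) (w : List Λ) :
    S.leftQuotient (t ++ x :: w) = (S.leftQuotient [x]).leftQuotient w := by
  rw [Language.leftQuotient_append, leftQuotient_eq_self ht, ← List.singleton_append,
    Language.leftQuotient_append]

end Loops

namespace WordOrder

variable {Λ : Type*} {W : WordOrder Λ} [Fintype Λ]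

lemma IsLower.forall_mem_loops_of_le {S : Language Λ} (hS : W.IsLower S) {a t : List Λ}
    (hat : W.le a t) (ht : ∀ x ∈ t, x ∈ loops S) : ∀ x ∈ a, x ∈ loops S := by
  intro x hx
  have hxt : W.le [x] t := W.le_trans (W.le_of_sublist (List.singleton_sublist.2 hx)) hat
  refine mem_loops.2 ((hS.leftQuotient_le _).antisymm ?_)
  simpa only [leftQuotient_eq_self ht] using hS.leftQuotient_anti hxt

variable {Λ : Type*} {W : WordOrder Λ}

/-- By Higman's lemma there is no infinite strictly descending chain of lower languages. -/
lemma wellFounded_isLower [Finite Λ] (W : WordOrder Λ) :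
    WellFounded fun S T : {S : Language Λ // W.IsLower S} ↦ S.1 < T.1 := by
  rw [wellFounded_iff_isEmpty_descending_chain]
  refine ⟨fun ⟨f, hf⟩ ↦ ?_⟩
  have hanti : StrictAnti fun n ↦ (f n).1 := strictAnti_nat_of_succ_lt hf
  choose w hw hw' using fun n ↦ Set.exists_of_ssubset (hf n)
  obtain ⟨i, j, hij, hle⟩ :=
    (Set.PartiallyWellOrderedOn.partiallyWellOrderedOn_sublistForall₂ Eq
      (Set.finite_univ (α := Λ)).partiallyWellOrderedOn) fun n ↦ ⟨w n, by simp⟩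
  obtain ⟨l, hl, hsub⟩ := List.sublistForall₂_iff.1 hle
  obtain rfl := List.forall₂_eq_eq_eq ▸ hl
  exact hw' i ((f (i + 1)).2 (W.le_of_sublist hsub) (hanti.antitone (Nat.succ_le_of_lt hij) (hw j)))

lemma IsLower.leftQuotient_induction [Fintype Λ] {P : Language Λ → Prop}
    (step : ∀ S, W.IsLower S → (∀ x ∉ loops S, P (S.leftQuotient [x])) → P S)
    {S : Language Λ} (hS : W.IsLower S) : P S := by
  suffices ∀ S : {S : Language Λ // W.IsLower S}, P S.1 from this ⟨S, hS⟩
  intro S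
  induction S using (wellFounded_isLower W).induction with
  | _ S ih =>
    exact step S.1 S.2 fun x hx ↦ ih ⟨_, S.2.leftQuotient [x]⟩
      ((S.2.leftQuotient_le [x]).lt_of_ne fun h ↦ hx (mem_loops.2 h))

/-! ### Trapping repetitions -/

section Traps

variable {Λ : Type*} {W : WordOrder Λ} [Fintype Λ] {S : Language Λ}

/-- `N` repetitions of any nonempty word `R` force every word of `S` above them into a state whose
loop alphabet contains the letters of `R`; this state is reached within the repetitions. -/
def Traps (W : WordOrder Λ) (S : Language Λ) (N : ℕ) : Prop :=
  ∀ ⦃R u v τ : List Λ⦄, R ≠ [] → τ ∈ S → W.le (u ++ (wordPow R N ++ v)) τ →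
    ∃ τ₁ τ₂ d e, τ = τ₁ ++ τ₂ ∧ wordPow R N = d ++ e ∧ W.le (u ++ d) τ₁ ∧ W.le (e ++ v) τ₂ ∧
      ∀ a ∈ R, a ∈ loops (S.leftQuotient τ₁)

lemma Traps.mono {m n : ℕ} (h : W.Traps S m) (hmn : m ≤ n) : W.Traps S n := by
  intro R u v τ hR hτ hle
  obtain ⟨k, rfl⟩ := Nat.exists_eq_add_of_le hmn
  rw [wordPow_add] at hle ⊢
  obtain ⟨τ₁, τ₂, d, e, rfl, hde, h₁, h₂, hloops⟩ := h hR hτ (by simpa using hle)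
  exact ⟨τ₁, τ₂, d, e ++ wordPow R k, rfl, by simp [hde], h₁, by simpa using h₂, hloops⟩

lemma exists_cut_of_forall_mem_loops (hS : W.IsLower S) {R u v t w₁ w₂ τ : List Λ} {n : ℕ}
    (hR : R ≠ []) (hn : W.maxSize ≤ n) (ht : ∀ a ∈ t, a ∈ loops S)
    (hw : u ++ (wordPow R (1 + n) ++ v) = w₁ ++ w₂) (h₁ : W.le w₁ t) (h₂ : W.le w₂ τ)
    (hlen : (u ++ R).length ≤ w₁.length) :
    ∃ t₁ t₂ d e, t = t₁ ++ t₂ ∧ wordPow R (1 + n) = d ++ e ∧ W.le (u ++ d) t₁ ∧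
      W.le (e ++ v) (t₂ ++ τ) ∧ ∀ a ∈ R, a ∈ loops S := by
  obtain ⟨z, rfl, hz⟩ := exists_of_append_eq_append (a := w₁) (b := w₂) (c := u ++ R)
    (d := wordPow R n ++ v) (by simpa [wordPow_one_add] using hw.symm) hlen
  have hRt : ∀ a ∈ R, a ∈ loops S := fun a ha ↦
    hS.forall_mem_loops_of_le h₁ ht a (by simp [ha])
  rw [List.append_assoc] at h₁
  obtain ⟨t₁, t₂, b, c, rfl, hbc, hb, h₃, h₄⟩ := W.exists_cut h₁
  have hpow : wordPow R (1 + n) ++ v = b ++ (c ++ w₂) := by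
    rw [wordPow_one_add, List.append_assoc, hz, ← List.append_assoc, hbc, List.append_assoc]
  obtain ⟨e, he, hev⟩ := exists_of_append_eq_append hpow
    (hb.trans (hn.trans ((Nat.le_add_left n 1).trans (le_length_wordPow hR _))))
  refine ⟨t₁, t₂, b, e, rfl, he, h₃, ?_, hRt⟩
  rw [← hev]
  exact W.append_le_append h₄ h₂

lemma Traps.of_leave_loops {t u v z R τ : List Λ} {x : Λ} {n k : ℕ}
    (h : W.Traps (S.leftQuotient [x]) n) (hR : R ≠ []) (ht : ∀ a ∈ t, a ∈ loops S)
    (hτ : t ++ x :: τ ∈ S) {a : List Λ} (ha : W.le a (t ++ [x]))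
    (hz : W.le (z ++ (wordPow R n ++ v)) τ) (haz : a ++ z = u ++ wordPow R k) :
    ∃ τ₁ τ₂ d e, t ++ x :: τ = τ₁ ++ τ₂ ∧ wordPow R (k + n) = d ++ e ∧ W.le (u ++ d) τ₁ ∧
      W.le (e ++ v) τ₂ ∧ ∀ a ∈ R, a ∈ loops (S.leftQuotient τ₁) := by
  have hτx : τ ∈ S.leftQuotient [x] := (append_mem_iff ht).1 hτ
  obtain ⟨τ₁, τ₂, d, e, rfl, hde, h₁, h₂, hloops⟩ := h hR hτx hz
  refine ⟨t ++ x :: τ₁, τ₂, wordPow R k ++ d, e, by simp, by simp [wordPow_add, hde], ?_, h₂,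
    by rwa [leftQuotient_append_cons ht]⟩
  have := W.append_le_append ha h₁
  rw [← List.append_assoc, haz] at this
  simpa using this

lemma traps_of_forall_notMem_loops (hS : W.IsLower S) {n : ℕ}
    (h : ∀ x ∉ loops S, W.Traps (S.leftQuotient [x]) n) : W.Traps S (1 + W.maxSize + n) := by
  intro R u v τ hR hτ hle
  rcases forall_mem_or_exists_first_notMem (loops S) τ with hall | ⟨t, x, τ', rfl, ht, hx⟩
  · rw [add_assoc] at hle ⊢
    obtain ⟨t₁, t₂, d, e, rfl, hde, h₁, h₂, hRS⟩ := exists_cut_of_forall_mem_loops hS hR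
      (Nat.le_add_right _ n) hall (List.append_nil _).symm hle (W.le_refl [])
      (by simp [wordPow_one_add])
    refine ⟨t₁, t₂, d, e, rfl, hde, h₁, by simpa using h₂, ?_⟩
    rwa [leftQuotient_eq_self fun a ha ↦ hall a (by simp [ha])]
  obtain ⟨a, b, c, habc, ha, hb, hc⟩ := W.exists_of_le_append_cons hle
  by_cases hlen : (u ++ R).length ≤ a.length
  · rw [add_assoc] at habc ⊢
    obtain ⟨t₁, t₂, d, e, rfl, hde, h₁, h₂, hRS⟩ := exists_cut_of_forall_mem_loops hS hR
      (Nat.le_add_right _ n) ht habc ha (W.append_le_append hb hc) hlen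
    refine ⟨t₁, t₂ ++ x :: τ', d, e, by simp, hde, h₁, by simpa using h₂, ?_⟩
    rwa [leftQuotient_eq_self fun a ha ↦ ht a (by simp [ha])]
  · have hlen' : (a ++ b).length ≤ (u ++ wordPow R (1 + W.maxSize)).length := by
      have := W.length_le_maxSize hb
      have := le_length_wordPow hR W.maxSize
      simp only [wordPow_one_add, List.length_append] at hlen ⊢
      lia
    obtain ⟨z, hz, rfl⟩ := exists_of_append_eq_append (b := wordPow R n ++ v) (d := c)
      (by simpa [wordPow_add] using habc) hlen'
    exact (h x hx).of_leave_loops hR ht hτ (W.append_le_append ha hb) hc hz.symm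

lemma IsLower.exists_forall_traps (hS : W.IsLower S) :
    ∃ N, ∀ u, W.Traps (S.leftQuotient u) N := by
  refine IsLower.leftQuotient_induction (P := fun S ↦ ∃ N, ∀ u, W.Traps (S.leftQuotient u) N)
    (fun S hS ih ↦ ?_) hS
  choose! N hN using ih
  set n := ∑ x, N x
  have hn (x : Λ) : N x ≤ n := Finset.single_le_sum (fun _ _ ↦ Nat.zero_le _) (Finset.mem_univ x)
  refine ⟨1 + W.maxSize + n, fun u ↦ ?_⟩
  rcases forall_mem_or_exists_first_notMem (loops S) u with hu | ⟨t, x, u', rfl, ht, hx⟩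
  · rw [leftQuotient_eq_self hu]
    exact traps_of_forall_notMem_loops hS fun x hx ↦ (hN x hx []).mono (hn x)
  · rw [leftQuotient_append_cons ht]
    exact (hN x hx u').mono ((hn x).trans (Nat.le_add_left _ _))

end Traps

/-! ### Chains of dominant states -/

section Chains

variable {Λ : Type*} {W : WordOrder Λ} {g : ℝ}

/-- The weight `∑ g ^ |a|` of an alphabet `L`; it is `1` iff `L*` has growth rate `1 / g`. -/
noncomputable def weight (W : WordOrder Λ) (g : ℝ) (L : Finset Λ) : ℝ := ∑ a ∈ L, g ^ W.sz a

lemma nonempty_of_weight_eq_one {L : Finset Λ} (h : W.weight g L = 1) : L.Nonempty := by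
  by_contra hL
  simp [weight, Finset.not_nonempty_iff_eq_empty.1 hL] at h

lemma eq_of_subset_of_weight {L L' : Finset Λ} (hg : 0 < g) (hsub : L ⊆ L')
    (hL : W.weight g L = 1) (hL' : W.weight g L' ≤ 1) : L' = L := by
  by_contra hne
  obtain ⟨a, ha, ha'⟩ := Finset.exists_of_ssubset (hsub.ssubset_of_ne (Ne.symm hne))
  have : W.weight g L < W.weight g L' :=
    Finset.sum_lt_sum_of_subset hsub ha ha' (by positivity) fun _ _ _ ↦ by positivity
  linarith

variable [Fintype Λ] {C p q S : Language Λ} {N k : ℕ}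

/-- A prefix state is dominant for `g` if the words over its loop alphabet have growth rate
`1 / g`. -/
def IsDominant (W : WordOrder Λ) (g : ℝ) (S : Language Λ) : Prop :=
  [] ∈ S ∧ W.weight g (loops S) = 1

/-- Some word in `S` visits a chain of `k + 1` dominant states. This corresponds to a contribution
of order `n ^ k * g⁻¹ ^ n` to the enumeration of `S`. -/
def HasChain (W : WordOrder Λ) (g : ℝ) : ℕ → Language Λ → Prop
  | 0, S => ∃ u, W.IsDominant g (S.leftQuotient u)
  | k + 1, S => ∃ u, W.IsDominant g (S.leftQuotient u) ∧
      ∃ y ∉ loops (S.leftQuotient u), W.HasChain g k ((S.leftQuotient u).leftQuotient [y])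

/-- The word, read from the state `S`, visits a chain of `k + 1` dominant states and reads the
factor `V (loops p)` upon entering each state `p` of the chain. -/
def FollowsChain (W : WordOrder Λ) (g : ℝ) (V : Finset Λ → List Λ) :
    ℕ → Language Λ → List Λ → Prop
  | 0, S, w => ∃ u w', W.IsDominant g (S.leftQuotient u) ∧
      w = u ++ (V (loops (S.leftQuotient u)) ++ w')
  | k + 1, S, w => ∃ u v x w', W.IsDominant g (S.leftQuotient u) ∧
      w = u ++ (V (loops (S.leftQuotient u)) ++ (v ++ x :: w')) ∧
      (∀ a ∈ v, a ∈ loops (S.leftQuotient u)) ∧ x ∉ loops (S.leftQuotient u) ∧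
      W.FollowsChain g V k ((S.leftQuotient u).leftQuotient [x]) w'

/-- The languages to which the growth and trapping estimates below apply: no state has a larger
growth rate than `1 / g`, and `N`-fold repetitions get trapped in a loop. -/
structure IsTame (W : WordOrder Λ) (g : ℝ) (N : ℕ) (C : Language Λ) : Prop where
  pos : 0 < g
  isLower : W.IsLower C
  weight_le (u : List Λ) : [] ∈ C.leftQuotient u → W.weight g (loops (C.leftQuotient u)) ≤ 1
  traps (u : List Λ) : W.Traps (C.leftQuotient u) N

/-- A word over `L` that is long enough to be caught in a loop even after the loss of `maxSize`
letters. -/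
noncomputable def block (W : WordOrder Λ) (N : ℕ) (L : Finset Λ) : List Λ :=
  wordPow L.toList (W.maxSize + N)

lemma mem_of_mem_block {L : Finset Λ} {a : Λ} (h : a ∈ W.block N L) : a ∈ L := by
  simpa using mem_of_mem_wordPow h

section FollowsChain

variable {V : Finset Λ → List Λ} {w : List Λ}

lemma FollowsChain.append_left (u : List Λ) (h : W.FollowsChain g V k (S.leftQuotient u) w) :
    W.FollowsChain g V k S (u ++ w) := by
  cases k with
  | zero =>
    obtain ⟨u', w', hdom, rfl⟩ := h
    rw [← Language.leftQuotient_append] at hdom ⊢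
    exact ⟨u ++ u', w', hdom, by simp⟩
  | succ k =>
    obtain ⟨u', v, x, w', hdom, rfl, h⟩ := h
    rw [← Language.leftQuotient_append] at hdom h ⊢
    exact ⟨u ++ u', v, x, w', hdom, by simp, h⟩

lemma FollowsChain.loops_append {t : List Λ} (ht : ∀ a ∈ t, a ∈ loops S)
    (h : W.FollowsChain g V k S w) : W.FollowsChain g V k S (t ++ w) :=
  .append_left t (by rwa [leftQuotient_eq_self ht])

lemma FollowsChain.of_append_eq {t a c : List Λ} (ht : ∀ a ∈ t, a ∈ loops S)
    (h : W.FollowsChain g V k S w) (heq : t ++ w = a ++ c) (hlen : a.length ≤ t.length) :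
    W.FollowsChain g V k S c := by
  obtain ⟨z, rfl, rfl⟩ := exists_of_append_eq_append heq hlen
  exact h.loops_append fun a ha ↦ ht a (by simp [ha])

lemma FollowsChain.of_eq_append {V V' Q : Finset Λ → List Λ} (hQ : ∀ L, ∀ a ∈ Q L, a ∈ L)
    (hV : ∀ L, V L = V' L ++ Q L) (h : W.FollowsChain g V k S w) :
    W.FollowsChain g V' k S w := by
  induction k generalizing S w with
  | zero =>
    obtain ⟨u, w', hdom, rfl⟩ := h
    exact ⟨u, Q (loops (S.leftQuotient u)) ++ w', hdom, by simp [hV]⟩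
  | succ k ih =>
    obtain ⟨u, v, x, w', hdom, rfl, hv, hx, h⟩ := h
    refine ⟨u, Q (loops (S.leftQuotient u)) ++ v, x, w', hdom, by simp [hV], ?_, hx, ih h⟩
    grind

lemma FollowsChain.exists_eq_append {V V' Q : Finset Λ → List Λ} (hQ : ∀ L, ∀ a ∈ Q L, a ∈ L)
    (hV : ∀ L, V L = V' L ++ Q L) (h : W.FollowsChain g V k S w) :
    ∃ u w', W.IsDominant g (S.leftQuotient u) ∧ w = u ++ (V (loops (S.leftQuotient u)) ++ w') ∧
      W.FollowsChain g V' k (S.leftQuotient u) (V' (loops (S.leftQuotient u)) ++ w') := by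
  cases k with
  | zero =>
    obtain ⟨u, w', hdom, rfl⟩ := h
    exact ⟨u, w', hdom, rfl, [], w', by simpa using hdom, by simp⟩
  | succ k =>
    obtain ⟨u, v, x, w', hdom, rfl, hv, hx, h⟩ := h
    exact ⟨u, v ++ x :: w', hdom, rfl, [], v, x, w', by simpa using hdom, by simp,
      by simpa using hv, by simpa using hx, by simpa using h.of_eq_append hQ hV⟩

end FollowsChain

namespace IsTame

lemma leftQuotient (hC : W.IsTame g N C) (u : List Λ) : W.IsTame g N (C.leftQuotient u) where
  pos := hC.pos
  isLower := hC.isLower.leftQuotient u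
  weight_le v := by simpa only [Language.leftQuotient_append] using hC.weight_le (u ++ v)
  traps v := by simpa only [Language.leftQuotient_append] using hC.traps (u ++ v)

lemma exists_isDominant_of_le (hC : W.IsTame g N C) {L : Finset Λ} (hL : W.weight g L = 1)
    {u v τ : List Λ} (hτ : τ ∈ C) (hle : W.le (u ++ (wordPow L.toList N ++ v)) τ) :
    ∃ τ₁ τ₂ d e, τ = τ₁ ++ τ₂ ∧ (∀ a ∈ d, a ∈ L) ∧ (∀ a ∈ e, a ∈ L) ∧ W.le (u ++ d) τ₁ ∧
      W.le (e ++ v) τ₂ ∧ loops (C.leftQuotient τ₁) = L ∧ W.IsDominant g (C.leftQuotient τ₁) := by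
  have hne : L.toList ≠ [] := by simpa using (nonempty_of_weight_eq_one hL).ne_empty
  obtain ⟨τ₁, τ₂, d, e, rfl, hde, h₁, h₂, hloops⟩ := hC.traps [] hne hτ hle
  have hmem : ∀ a ∈ d ++ e, a ∈ L := fun a ha ↦
    Finset.mem_toList.1 (mem_of_mem_wordPow (hde ▸ ha))
  have hnil : [] ∈ C.leftQuotient τ₁ := (hC.isLower.leftQuotient τ₁).nil_mem hτ
  have heq : loops (C.leftQuotient τ₁) = L :=
    eq_of_subset_of_weight hC.pos (fun a ha ↦ hloops a (by simpa using ha)) hL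
      (hC.weight_le τ₁ hnil)
  exact ⟨τ₁, τ₂, d, e, rfl, fun a ha ↦ hmem a (by simp [ha]), fun a ha ↦ hmem a (by simp [ha]),
    h₁, h₂, heq, hnil, heq ▸ hL⟩

lemma exists_isDominant_of_le_block (hC : W.IsTame g N C) {u w d e τ : List Λ}
    (hp : W.IsDominant g (S.leftQuotient u))
    (hde : u ++ (W.block N (loops (S.leftQuotient u)) ++ w) = d ++ e)
    (hd : d.length ≤ W.maxSize) (hCS : C ≤ S.leftQuotient d) (hτ : τ ∈ C) (hle : W.le e τ) :
    ∃ τ₁ τ₂ e', τ = τ₁ ++ τ₂ ∧ (∀ a ∈ e', a ∈ loops (S.leftQuotient u)) ∧ W.le (e' ++ w) τ₂ ∧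
      loops (C.leftQuotient τ₁) = loops (S.leftQuotient u) ∧
      W.IsDominant g (C.leftQuotient τ₁) ∧ C.leftQuotient τ₁ ≤ S.leftQuotient u := by
  set L := loops (S.leftQuotient u)
  set R := wordPow L.toList W.maxSize
  have hR : ∀ a ∈ R, a ∈ L := fun a ha ↦ Finset.mem_toList.1 (mem_of_mem_wordPow ha)
  have hdR : d.length ≤ (u ++ R).length := by
    have := le_length_wordPow (R := L.toList)
      (by simpa using (nonempty_of_weight_eq_one hp.2).ne_empty) W.maxSize
    simp only [List.length_append, R]
    lia
  obtain ⟨z, hz, rfl⟩ := exists_of_append_eq_append (a := u ++ R)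
    (b := wordPow L.toList N ++ w) (by rw [← hde, block, wordPow_add]; simp [R]) hdR
  obtain ⟨τ₁, τ₂, d', e', rfl, hd', he', h₁, h₂, hloops, hdom⟩ :=
    hC.exists_isDominant_of_le hp.2 hτ hle
  refine ⟨τ₁, τ₂, e', rfl, he', h₂, hloops, hdom, ?_⟩
  calc C.leftQuotient τ₁ ≤ C.leftQuotient (z ++ d') := hC.isLower.leftQuotient_anti h₁
    _ ≤ (S.leftQuotient d).leftQuotient (z ++ d') := fun v hv ↦ hCS hv
    _ = (S.leftQuotient u).leftQuotient (R ++ d') := by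
      simp_rw [← Language.leftQuotient_append, ← List.append_assoc, hz]
    _ = S.leftQuotient u := leftQuotient_eq_self <| List.forall_mem_append.2 ⟨hR, hd'⟩

theorem hasChain_of_le (hC : W.IsTame g N C) (hS : W.IsLower S) {d e τ : List Λ}
    (hfol : W.FollowsChain g (W.block N) k S (d ++ e)) (hd : d.length ≤ W.maxSize)
    (hCS : C ≤ S.leftQuotient d) (hτ : τ ∈ C) (hle : W.le e τ) : W.HasChain g k C := by
  induction k generalizing S C d e τ with
  | zero =>
    obtain ⟨u, w, hp, hde⟩ := hfol
    obtain ⟨τ₁, _, _, _, _, _, _, hdom, _⟩ :=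
      hC.exists_isDominant_of_le_block hp hde.symm hd hCS hτ hle
    exact ⟨τ₁, hdom⟩
  | succ k ih =>
    obtain ⟨u, v, x, w, hp, hde, hv, hx, hfol⟩ := hfol
    obtain ⟨τ₁, τ₂, e', rfl, he', hle, hloops, hdom, hqp⟩ :=
      hC.exists_isDominant_of_le_block hp hde.symm hd hCS hτ hle
    set p := S.leftQuotient u
    have hq := hC.leftQuotient τ₁
    set q := C.leftQuotient τ₁
    have hτ₂ : τ₂ ∈ q := hτ
    have hev : ∀ a ∈ e' ++ v, a ∈ loops p := List.forall_mem_append.2 ⟨he', hv⟩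
    rcases forall_mem_or_exists_first_notMem (loops q) τ₂ with hall | ⟨t, y, τ₃, rfl, ht, hy⟩
    · exact absurd (hloops ▸ hq.isLower.forall_mem_loops_of_le hle hall x (by simp)) hx
    obtain ⟨a, b, c, habc, ha, hb, hc⟩ := W.exists_of_le_append_cons hle
    have hxa : a.length ≤ (e' ++ v).length := by
      by_contra! hlt
      obtain ⟨x', z, rfl, hz⟩ := exists_cons_of_append_eq_append
        (show a ++ (b ++ c) = (e' ++ v) ++ x :: w by simpa using habc.symm) hlt
      obtain rfl : x = x' := by simp_all
      exact hx (hloops ▸ hq.isLower.forall_mem_loops_of_le ha ht x (by simp))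
    refine ⟨τ₁, hdom, y, hy, ih (hq.leftQuotient [y]) (hS.leftQuotient u) ?_
      (W.length_le_maxSize hb) ?_ ((append_mem_iff ht).1 hτ₂) hc⟩
    · exact .of_append_eq hev (.append_left [x] hfol) (by simpa using habc) hxa
    · exact (hq.isLower.leftQuotient_anti hb).trans fun w hw ↦ hqp hw

section Transition

variable {w τ : List Λ}

lemma hasChain_leftQuotient_of_le (hq : W.IsTame g N q) (hp : W.IsLower p) (hqp : q ≤ p)
    {t b c : List Λ} {y : Λ} (ht : ∀ a ∈ t, a ∈ loops q) (hτ : t ++ y :: τ ∈ q)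
    (hfol : W.FollowsChain g (W.block N) k p (b ++ c)) (hb : W.le b [y]) (hc : W.le c τ) :
    W.HasChain g k (q.leftQuotient [y]) :=
  (hq.leftQuotient [y]).hasChain_of_le hp hfol (W.length_le_maxSize hb)
    ((hq.isLower.leftQuotient_anti hb).trans fun _ hw ↦ hqp hw) ((append_mem_iff ht).1 hτ) hc

variable {G σ : List Λ}

lemma forall_mem_loops_of_append_mem (hq : W.IsTame g N q) (hp : W.IsLower p) (hqp : q ≤ p)
    (hch : ∀ y ∉ loops q, ¬ W.HasChain g k (q.leftQuotient [y]))
    (hfol : W.FollowsChain g (W.block N) k p G) (hw : ∀ a ∈ w, a ∈ loops p)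
    (hτ : τ ++ σ ∈ q) (hwτ : W.le w τ) (hGσ : W.le G σ) : ∀ a ∈ τ, a ∈ loops q := by
  rcases forall_mem_or_exists_first_notMem (loops q) τ with hall | ⟨t, y, τ', rfl, ht, hy⟩
  · exact hall
  obtain ⟨a, b, c, rfl, -, hb, hc⟩ := W.exists_of_le_append_cons hwτ
  refine absurd ?_ (hch y hy)
  refine hq.hasChain_leftQuotient_of_le hp hqp ht (τ := τ' ++ σ) (b := b) (c := c ++ G)
    (by simpa using hτ) ?_ hb (W.append_le_append hc hGσ)
  simpa using hfol.loops_append (t := b ++ c) (by grind)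

lemma exists_split_of_append_le (hq : W.IsTame g N q) (hp : W.IsLower p) (hqp : q ≤ p)
    (hch : ∀ y ∉ loops q, ¬ W.HasChain g k (q.leftQuotient [y]))
    (hfol : W.FollowsChain g (W.block N) k p G) (hw : ∀ a ∈ w, a ∈ loops p)
    (hσ : σ ∈ q) (hle : W.le (w ++ G) σ) :
    ∃ s σ' η ζ, σ = s ++ σ' ∧ (∀ a ∈ s, a ∈ loops q) ∧ W.le (w ++ η) s ∧ G = η ++ ζ ∧
      W.le ζ σ' := by
  rcases forall_mem_or_exists_first_notMem (loops q) σ with hall | ⟨s, y, σ', rfl, hs, hy⟩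
  · exact ⟨σ, [], G, [], by simp, hall, hle, by simp, W.le_refl _⟩
  obtain ⟨a, b, c, habc, ha, hb, hc⟩ := W.exists_of_le_append_cons hle
  have hwa : w.length ≤ a.length := by
    by_contra! hlt
    exact hch y hy (hq.hasChain_leftQuotient_of_le hp hqp hs hσ
      (.of_append_eq hw hfol habc hlt.le) hb hc)
  obtain ⟨η, rfl, rfl⟩ := exists_of_append_eq_append habc.symm hwa
  exact ⟨s, y :: σ', η, b ++ c, rfl, hs, ha, rfl, W.append_le_append hb hc⟩

end Transition

/-- As `C` has no longer chain, a word of `C` containing `u`, a repetition of the dominant loop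
alphabet `L`, `b`, `η` and `G` must stay in a state with loop alphabet `L` until it has read `η`. -/
theorem exists_split_of_not_hasChain (hC : W.IsTame g N C) (hch : ¬ W.HasChain g (k + 1) C)
    {u b η G τ σ : List Λ} (hdom : W.IsDominant g (C.leftQuotient u))
    (hG : W.FollowsChain g (W.block N) k (C.leftQuotient u) G)
    (hb : ∀ a ∈ b, a ∈ loops (C.leftQuotient u)) (hη : ∀ a ∈ η, a ∈ loops (C.leftQuotient u))
    (hτσ : τ ++ σ ∈ C)
    (hτ : W.le (u ++ (wordPow (loops (C.leftQuotient u)).toList N ++ b)) τ)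
    (hσ : W.le (η ++ G) σ) :
    loops (C.leftQuotient τ) = loops (C.leftQuotient u) ∧
      ∃ s σ' η' ζ, σ = s ++ σ' ∧ (∀ a ∈ s, a ∈ loops (C.leftQuotient u)) ∧
        W.le (η ++ η') s ∧ G = η' ++ ζ ∧ W.le ζ σ' := by
  have hτC : τ ∈ C := hC.isLower (W.le_append_right σ (W.le_refl τ)) hτσ
  obtain ⟨τ₁, τ₂, d, e, rfl, hd, he, h₁, h₂, hloops, hq⟩ :=
    hC.exists_isDominant_of_le hdom.2 hτC hτ
  have hp := hC.isLower.leftQuotient u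
  have hqp : C.leftQuotient τ₁ ≤ C.leftQuotient u :=
    calc C.leftQuotient τ₁ ≤ C.leftQuotient (u ++ d) := hC.isLower.leftQuotient_anti h₁
      _ = C.leftQuotient u := by rw [Language.leftQuotient_append, leftQuotient_eq_self hd]
  have hch' : ∀ y ∉ loops (C.leftQuotient τ₁),
      ¬ W.HasChain g k ((C.leftQuotient τ₁).leftQuotient [y]) :=
    fun y hy h ↦ hch ⟨τ₁, hq, y, hy, h⟩
  have hτ₂ := (hC.leftQuotient τ₁).forall_mem_loops_of_append_mem hp hqp hch'
    (hG.loops_append hη) (List.forall_mem_append.2 ⟨he, hb⟩)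
    (show τ₂ ++ σ ∈ C.leftQuotient τ₁ by simpa using hτσ) h₂ hσ
  have hstate : C.leftQuotient (τ₁ ++ τ₂) = C.leftQuotient τ₁ := by
    rw [Language.leftQuotient_append, leftQuotient_eq_self hτ₂]
  have hσq : σ ∈ C.leftQuotient τ₁ := hstate ▸ hτσ
  refine ⟨hstate ▸ hloops, ?_⟩
  simpa only [hloops] using
    (hC.leftQuotient τ₁).exists_split_of_append_le hp hqp hch' hG hη hσq hσ

end IsTame

end Chains

end WordOrder

/-! ### Swapping two letters -/

lemma eq_and_eq_of_append_cons_eq {α : Type*} {m : α} {s s' r r' : List α} (hs : m ∉ s)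
    (hs' : m ∉ s') (h : s ++ m :: r = s' ++ m :: r') : s = s' ∧ r = r' := by
  rcases List.append_eq_append_iff.1 h with ⟨_ | ⟨x, l⟩, rfl, h⟩ | ⟨_ | ⟨x, l⟩, rfl, h⟩ <;>
    simp_all

namespace WordOrder

section Containment

variable {Λ : Type*} (W : WordOrder Λ) {L : Finset Λ} {m : Λ} {s w z β t t' : List Λ}

lemma unit_le {o : Λ} (ho : W.sz o = 1) (x : Λ) : W.le [o] [x] := by
  obtain ⟨o', ho', hx⟩ := W.exists_unit_le x
  rwa [W.unit_unique ho ho']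

lemma eq_of_append_cons_le_singleton {a : Λ} (hm : W.sz a ≤ W.sz m)
    (h : W.le (w ++ m :: z) [a]) : w = [] ∧ a = m ∧ z = [] := by
  have hsize := W.size_le h
  have hw := W.length_le_size w
  have hz := W.length_le_size z
  simp only [size_append, size_cons, size_nil] at hsize
  obtain rfl : w = [] := List.length_eq_zero_iff.1 (by lia)
  obtain rfl : z = [] := List.length_eq_zero_iff.1 (by lia)
  simpa [eq_comm] using W.eq_of_sum_sz_eq h (by simp; lia)

lemma exists_of_append_cons_le (hm : ∀ a ∈ L, W.sz a ≤ W.sz m) (hs : ∀ a ∈ s, a ∈ L)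
    (h : W.le (w ++ m :: z) s) : ∃ s₁ s₂, s = s₁ ++ m :: s₂ ∧ W.le w s₁ ∧ W.le z s₂ := by
  induction s generalizing w with
  | nil => simpa using W.eq_nil_of_le_nil h
  | cons a s ih =>
    obtain ⟨c₁, c₂, hc, h₁, h₂⟩ := W.le_cons_iff.1 h
    rw [List.forall_mem_cons] at hs
    by_cases hlen : c₁.length ≤ w.length
    · obtain ⟨w', rfl, rfl⟩ := exists_of_append_eq_append hc hlen
      obtain ⟨s₁, s₂, rfl, h₃, h₄⟩ := ih hs.2 h₂
      exact ⟨a :: s₁, s₂, rfl, W.le_cons_iff.2 ⟨c₁, w', rfl, h₁, h₃⟩, h₄⟩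
    · obtain ⟨m', z', rfl, hz⟩ := exists_cons_of_append_eq_append hc.symm (not_le.1 hlen)
      obtain ⟨rfl, rfl⟩ := List.cons_eq_cons.1 hz
      obtain ⟨rfl, rfl, rfl⟩ := W.eq_of_append_cons_le_singleton (hm a hs.1) h₁
      exact ⟨[], s, rfl, W.le_refl _, h₂⟩

lemma exists_first_of_cons_le (hmax : ∀ a ∈ L, W.sz a ≤ W.sz m) (hs : ∀ a ∈ s, a ∈ L)
    (h : W.le (m :: z) s) : ∃ s₁ s₂, s = s₁ ++ m :: s₂ ∧ m ∉ s₁ ∧ W.le z s₂ := by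
  obtain ⟨s₁, s₂, rfl, -, hz⟩ := W.exists_of_append_cons_le (w := []) hmax hs h
  obtain ⟨s₃, s₄, h₃, hm⟩ := List.eq_append_cons_of_mem (show m ∈ s₁ ++ [m] by simp)
  refine ⟨s₃, s₄ ++ s₂, ?_, hm, W.le_append_left _ hz⟩
  rw [← List.cons_append, ← List.append_assoc, ← h₃]
  simp

lemma exists_cons_of_cons_cons_le (hmax : ∀ a ∈ L, W.sz a ≤ W.sz m) (hs : ∀ a ∈ s, a ∈ L)
    {x : Λ} (h : W.le (x :: m :: z) s) : ∃ a s', s = a :: s' ∧ W.le (m :: z) s' := by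
  cases s with
  | nil => simpa using W.eq_nil_of_le_nil h
  | cons a s =>
    refine ⟨a, s, rfl, ?_⟩
    obtain ⟨_ | ⟨y, _ | ⟨m', c⟩⟩, c₂, hc, h₁, h₂⟩ := W.le_cons_iff.1 h
    · rw [List.nil_append] at hc
      exact W.le_trans (W.le_of_sublist (List.sublist_cons_self x _)) (hc ▸ h₂)
    · simp_all
    · obtain ⟨rfl, rfl, rfl⟩ : x = y ∧ m = m' ∧ z = c ++ c₂ := by simpa using hc
      simpa using (W.eq_of_append_cons_le_singleton (w := [x]) (hmax a (hs a (by simp))) h₁).1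

/-- The word `t` contains `β`, but none of its proper prefixes does. -/
def MinimallyContains (β t : List Λ) : Prop :=
  W.le β t ∧ ∀ t', t' <+: t → W.le β t' → t' = t

lemma exists_prefix_minimallyContains (h : W.le β t) :
    ∃ t₁ t₂, t = t₁ ++ t₂ ∧ W.MinimallyContains β t₁ := by
  classical
  have hex : ∃ k, W.le β (t.take k) := ⟨t.length, by simpa using h⟩
  refine ⟨_, _, (t.take_append_drop (Nat.find hex)).symm, Nat.find_spec hex, fun t' ht' hle ↦ ?_⟩
  have ht't : t' = t.take t'.length := List.prefix_iff_eq_take.1 (ht'.trans (List.take_prefix _ _))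
  refine ht'.eq_of_length_le ((List.length_take_le _ _).trans (Nat.find_min' hex (ht't ▸ hle)))

variable {W} in
lemma MinimallyContains.eq_of_append_eq (h : W.MinimallyContains β t)
    (h' : W.MinimallyContains β t') {a b : List Λ} (he : t ++ a = t' ++ b) : t = t' := by
  rcases le_total t.length t'.length with hl | hl
  · exact h'.2 _ (List.prefix_of_prefix_length_le ⟨a, rfl⟩ ⟨b, he.symm⟩ hl) h.1
  · exact (h.2 _ (List.prefix_of_prefix_length_le ⟨b, rfl⟩ ⟨a, he⟩ hl) h'.1).symm

end Containment

section Swap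

variable {Λ : Type*} [Fintype Λ] {W : WordOrder Λ} {g : ℝ} {C : Language Λ} {N k : ℕ}
  {u b G ε τ : List Λ} {m o : Λ}

/-- The word `u`, followed by the loop alphabet of the state it leads to, which is repeated so often
that every word of `C` above must get trapped in a state with these loops, and by `b` and `m`. -/
noncomputable def anchor (N : ℕ) (C : Language Λ) (u b : List Λ) (m : Λ) : List Λ :=
  u ++ (wordPow (loops (C.leftQuotient u)).toList N ++ (b ++ [m]))

/-- The situation in which a letter of size one may be moved across the letter `m` of maximal size
between the anchor and the word `m :: G`, which follows a chain of maximal length. -/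
structure IsSwapSite (W : WordOrder Λ) (g : ℝ) (N k : ℕ) (C : Language Λ) (u b : List Λ) (m : Λ)
    (G : List Λ) : Prop where
  isTame : W.IsTame g N C
  not_hasChain : ¬ W.HasChain g (k + 1) C
  isDominant : W.IsDominant g (C.leftQuotient u)
  followsChain : W.FollowsChain g (W.block N) k (C.leftQuotient u) G
  mem_loops : ∀ a ∈ m :: b, a ∈ loops (C.leftQuotient u)
  sz_le : ∀ a ∈ loops (C.leftQuotient u), W.sz a ≤ W.sz m
  maxSize_le : W.maxSize ≤ b.length

namespace IsSwapSite

lemma exists_append_of_anchor_append_le (h : W.IsSwapSite g N k C u b m G)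
    (hε : ∀ a ∈ ε, a ∈ loops (C.leftQuotient u)) (hτ : τ ∈ C)
    (hle : W.le (anchor N C u b m ++ (ε ++ m :: G)) τ) :
    ∃ τ₁ τ₂, τ = τ₁ ++ τ₂ ∧ W.le (anchor N C u b m) τ₁ ∧ W.le (ε ++ m :: G) τ₂ := by
  rw [anchor] at hle ⊢
  set R := wordPow (loops (C.leftQuotient u)).toList N
  obtain ⟨τ₁, τ₂, b₁, c, rfl, hc, hb₁, h₁, h₂⟩ :=
    W.exists_cut (a₁ := u ++ R) (a₂ := b ++ m :: (ε ++ m :: G)) (by simpa using hle)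
  obtain ⟨b₂, rfl, rfl⟩ := exists_of_append_eq_append hc (hb₁.trans h.maxSize_le)
  obtain ⟨hm, hb⟩ := List.forall_mem_cons.1 h.mem_loops
  rw [List.forall_mem_append] at hb
  obtain ⟨-, s, σ, η, ζ, rfl, hs, hη, hG', hζ⟩ :=
    h.isTame.exists_split_of_not_hasChain h.not_hasChain h.isDominant (G := m :: G)
      (η := b₂ ++ m :: ε) (h.followsChain.loops_append (t := [m]) (by simpa using hm)) hb.1
      (List.forall_mem_append.2 ⟨hb.2, List.forall_mem_cons.2 ⟨hm, hε⟩⟩) hτ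
      (by simpa using h₁) (by simpa using h₂)
  obtain ⟨s₁, s₂, rfl, h₃, h₄⟩ := W.exists_of_append_cons_le h.sz_le hs
    (w := b₂) (z := ε ++ η) (by simpa using hη)
  refine ⟨τ₁ ++ (s₁ ++ [m]), s₂ ++ σ, by simp, ?_, ?_⟩
  · simpa using W.append_le_append h₁ (W.append_le_append h₃ (W.le_refl [m]))
  · rw [hG', ← List.append_assoc]
    exact W.append_le_append h₄ hζ

lemma exists_minimallyContains_of_anchor_append_le (h : W.IsSwapSite g N k C u b m G)
    (hε : ∀ a ∈ ε, a ∈ loops (C.leftQuotient u)) (hτ : τ ∈ C)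
    (hle : W.le (anchor N C u b m ++ (ε ++ m :: G)) τ) :
    ∃ t s σ η ζ, τ = t ++ (s ++ σ) ∧ W.MinimallyContains (anchor N C u b m) t ∧
      loops (C.leftQuotient t) = loops (C.leftQuotient u) ∧
      (∀ a ∈ s, a ∈ loops (C.leftQuotient u)) ∧ W.le (ε ++ m :: η) s ∧ G = η ++ ζ ∧
      W.le ζ σ := by
  obtain ⟨τ₁, τ₂, rfl, h₁, h₂⟩ := h.exists_append_of_anchor_append_le hε hτ hle
  obtain ⟨t, r, rfl, ht⟩ := W.exists_prefix_minimallyContains h₁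
  obtain ⟨hm, hb⟩ := List.forall_mem_cons.1 h.mem_loops
  have hm' : ∀ a ∈ [m], a ∈ loops (C.leftQuotient u) := by simpa using hm
  obtain ⟨hloops, s, σ, η, ζ, hσ, hs, hη, hGη, hζ⟩ :=
    h.isTame.exists_split_of_not_hasChain h.not_hasChain h.isDominant (τ := t) (σ := r ++ τ₂)
      (η := ε ++ [m]) h.followsChain
      (List.forall_mem_append.2 ⟨hb, hm'⟩) (List.forall_mem_append.2 ⟨hε, hm'⟩)
      (by simpa using hτ) ht.1 (by simpa using W.le_append_left r h₂)
  exact ⟨t, s, σ, η, ζ, by simp [← hσ], ht, hloops, hs, by simpa using hη, hGη, hζ⟩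

end IsSwapSite

/-- The words of size `n` of `C` that contain `α`. -/
def containing (W : WordOrder Λ) (C : Language Λ) (α : List Λ) (n : ℕ) : Set (List Λ) :=
  {τ | τ ∈ C ∧ W.size τ = n ∧ W.le α τ}

/-- The data `(t, a, s, r)` shared by the words containing `β o m m G` and those containing
`β m o m G`: they are the words `t a s m r` and `t s m a r` respectively, where `t` ends with the
first occurrence of `β`. -/
structure IsSwapDatum (W : WordOrder Λ) (C : Language Λ) (β : List Λ) (m : Λ) (G : List Λ) (n : ℕ)
    (x : List Λ × Λ × List Λ × List Λ) : Prop where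
  minimallyContains : W.MinimallyContains β x.1
  mem_loops : ∀ b ∈ m :: x.2.1 :: x.2.2.1, b ∈ loops (C.leftQuotient x.1)
  notMem : m ∉ x.2.2.1
  mem : x.2.2.2 ∈ C.leftQuotient x.1
  le : W.le (m :: G) x.2.2.2
  size_eq : W.size x.1 + W.sz x.2.1 + W.size x.2.2.1 + W.sz m + W.size x.2.2.2 = n

namespace IsSwapDatum

variable {β : List Λ} {n : ℕ}

lemma injOn_unit_first : Set.InjOn (fun x : List Λ × Λ × List Λ × List Λ ↦
    x.1 ++ (x.2.1 :: (x.2.2.1 ++ m :: x.2.2.2))) {x | W.IsSwapDatum C β m G n x} := by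
  rintro ⟨t, a, s, r⟩ h ⟨t', a', s', r'⟩ h' he
  obtain rfl : t = t' := h.minimallyContains.eq_of_append_eq h'.minimallyContains he
  obtain ⟨rfl, he⟩ := List.cons_eq_cons.1 (List.append_cancel_left he)
  obtain ⟨rfl, rfl⟩ := eq_and_eq_of_append_cons_eq h.notMem h'.notMem he
  rfl

lemma injOn_max_first : Set.InjOn (fun x : List Λ × Λ × List Λ × List Λ ↦
    x.1 ++ (x.2.2.1 ++ m :: (x.2.1 :: x.2.2.2))) {x | W.IsSwapDatum C β m G n x} := by
  rintro ⟨t, a, s, r⟩ h ⟨t', a', s', r'⟩ h' he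
  obtain rfl : t = t' := h.minimallyContains.eq_of_append_eq h'.minimallyContains he
  obtain ⟨rfl, he⟩ :=
    eq_and_eq_of_append_cons_eq h.notMem h'.notMem (List.append_cancel_left he)
  obtain ⟨rfl, rfl⟩ := List.cons_eq_cons.1 he
  rfl

end IsSwapDatum

lemma IsSwapSite.containing_unit_first (h : W.IsSwapSite g N k C u b m G)
    (ho : o ∈ loops (C.leftQuotient u)) (ho₁ : W.sz o = 1) (n : ℕ) :
    W.containing C (anchor N C u b m ++ o :: m :: m :: G) n =
      (fun x ↦ x.1 ++ (x.2.1 :: (x.2.2.1 ++ m :: x.2.2.2))) ''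
        {x | W.IsSwapDatum C (anchor N C u b m) m G n x} := by
  have hm := List.forall_mem_cons.1 h.mem_loops
  ext τ
  constructor
  · rintro ⟨hτ, hn, hle⟩
    obtain ⟨t, s, σ, η, ζ, rfl, ht, hloops, hs, hη, rfl, hζ⟩ :=
      h.exists_minimallyContains_of_anchor_append_le (ε := [o, m]) (by simp [ho, hm.1]) hτ hle
    obtain ⟨a, s', rfl, h₁⟩ := W.exists_cons_of_cons_cons_le h.sz_le hs hη
    rw [List.forall_mem_cons] at hs
    obtain ⟨s₁, s₂, rfl, h₂, h₃⟩ := W.exists_first_of_cons_le h.sz_le hs.2 h₁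
    have hmem : ∀ c ∈ a :: (s₁ ++ [m]), c ∈ loops (C.leftQuotient t) := by grind
    refine ⟨(t, a, s₁, s₂ ++ σ), ⟨ht, by grind, h₂, (append_mem_iff hmem).1 ?_,
      W.append_le_append h₃ hζ, ?_⟩, by simp⟩
    · simpa using hτ
    · simp only [size_append, size_cons] at hn ⊢
      lia
  · rintro ⟨⟨t, a, s, r⟩, hx, rfl⟩
    have hmem : ∀ c ∈ a :: (s ++ [m]), c ∈ loops (C.leftQuotient t) := by
      have := hx.mem_loops
      grind
    refine ⟨?_, ?_, W.append_le_append hx.minimallyContains.1 ?_⟩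
    · simpa using (append_mem_iff hmem).2 hx.mem
    · have := hx.size_eq
      simp only [size_append, size_cons] at this ⊢
      lia
    · exact W.append_le_append (W.unit_le ho₁ a)
        (W.le_append_left s (W.append_le_append (W.le_refl [m]) hx.le))

lemma IsSwapSite.containing_max_first (h : W.IsSwapSite g N k C u b m G)
    (ho : o ∈ loops (C.leftQuotient u)) (ho₁ : W.sz o = 1) (n : ℕ) :
    W.containing C (anchor N C u b m ++ m :: o :: m :: G) n =
      (fun x ↦ x.1 ++ (x.2.2.1 ++ m :: (x.2.1 :: x.2.2.2))) ''
        {x | W.IsSwapDatum C (anchor N C u b m) m G n x} := by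
  have hm := List.forall_mem_cons.1 h.mem_loops
  ext τ
  constructor
  · rintro ⟨hτ, hn, hle⟩
    obtain ⟨t, s, σ, η, ζ, rfl, ht, hloops, hs, hη, rfl, hζ⟩ :=
      h.exists_minimallyContains_of_anchor_append_le (ε := [m, o]) (by simp [ho, hm.1]) hτ hle
    obtain ⟨s₁, s', rfl, h₂, h₁⟩ := W.exists_first_of_cons_le h.sz_le hs hη
    rw [List.forall_mem_append, List.forall_mem_cons] at hs
    obtain ⟨a, s₂, rfl, h₃⟩ := W.exists_cons_of_cons_cons_le h.sz_le hs.2.2 h₁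
    have hmem : ∀ c ∈ s₁ ++ [m, a], c ∈ loops (C.leftQuotient t) := by grind
    refine ⟨(t, a, s₁, s₂ ++ σ), ⟨ht, by grind, h₂, (append_mem_iff hmem).1 ?_,
      W.append_le_append h₃ hζ, ?_⟩, by simp⟩
    · simpa using hτ
    · simp only [size_append, size_cons] at hn ⊢
      lia
  · rintro ⟨⟨t, a, s, r⟩, hx, rfl⟩
    have hmem : ∀ c ∈ s ++ [m, a], c ∈ loops (C.leftQuotient t) := by
      have := hx.mem_loops
      grind
    refine ⟨?_, ?_, W.append_le_append hx.minimallyContains.1 ?_⟩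
    · simpa using (append_mem_iff hmem).2 hx.mem
    · have := hx.size_eq
      simp only [size_append, size_cons] at this ⊢
      lia
    · exact W.le_append_left s
        (W.append_le_append (W.le_refl [m]) (W.append_le_append (W.unit_le ho₁ a) hx.le))

theorem IsSwapSite.ncard_containing_swap (h : W.IsSwapSite g N k C u b m G)
    (ho : o ∈ loops (C.leftQuotient u)) (ho₁ : W.sz o = 1) (n : ℕ) :
    (W.containing C (anchor N C u b m ++ o :: m :: m :: G) n).ncard =
      (W.containing C (anchor N C u b m ++ m :: o :: m :: G) n).ncard := by
  rw [h.containing_unit_first ho ho₁, h.containing_max_first ho ho₁,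
    IsSwapDatum.injOn_unit_first.ncard_image,
    IsSwapDatum.injOn_max_first.ncard_image]

end Swap

/-! ### Many equivalent words -/

section ManyEquivalent

variable {Λ : Type*} {W : WordOrder Λ} {L : Finset Λ} {m o : Λ} {K : ℕ}

/-- A letter `m` of maximal size in `L` and a different letter `o` of size one in `L`. -/
structure IsSwapPair (W : WordOrder Λ) (L : Finset Λ) (m o : Λ) : Prop where
  max_mem : m ∈ L
  unit_mem : o ∈ L
  ne : m ≠ o
  sz_le : ∀ a ∈ L, W.sz a ≤ W.sz m
  sz_unit : W.sz o = 1

/-- The word `m ^ (j + 1) o m ^ (K + 1 - j)`, for `j ≤ K`. -/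
def swapWord (m o : Λ) (K j : ℕ) : List Λ :=
  List.replicate (j + 1) m ++ o :: List.replicate (K + 1 - j) m

lemma IsSwapPair.mem_of_mem_swapWord (h : W.IsSwapPair L m o) {j : ℕ} {a : Λ}
    (ha : a ∈ swapWord m o K j) : a ∈ L := by
  simp only [swapWord, List.mem_append, List.mem_cons, List.mem_replicate] at ha
  obtain ⟨-, rfl⟩ | rfl | ⟨-, rfl⟩ := ha
  exacts [h.max_mem, h.unit_mem, h.max_mem]

lemma swapWord_injective (h : m ≠ o) (K : ℕ) : Function.Injective (swapWord m o K) := by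
  intro i j hij
  have hmem (n : ℕ) : o ∉ List.replicate n m := fun ho ↦ h (List.eq_of_mem_replicate ho).symm
  simpa using congrArg List.length (eq_and_eq_of_append_cons_eq (hmem _) (hmem _) hij).1

lemma size_swapWord {j : ℕ} (hj : j ≤ K) :
    W.size (swapWord m o K j) = (K + 2) * W.sz m + W.sz o := by
  obtain ⟨r, rfl⟩ := Nat.exists_eq_add_of_le hj
  have : j + r + 1 - j = r + 1 := by lia
  simp only [swapWord, this, size, List.map_append, List.map_replicate, List.map_cons,
    List.sum_append, List.sum_replicate, List.sum_cons, smul_eq_mul]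
  ring

lemma swapWord_append_eq (m o : Λ) {K j : ℕ} (hj : j < K) (w : List Λ) :
    swapWord m o K j ++ w =
      List.replicate j m ++ m :: o :: m :: m :: (List.replicate (K - 1 - j) m ++ w) := by
  have : K + 1 - j = K - 1 - j + 1 + 1 := by lia
  rw [swapWord, this, List.replicate_succ' (n := j)]
  simp [List.replicate_succ]

lemma swapWord_succ_append_eq (m o : Λ) {K j : ℕ} (hj : j < K) (w : List Λ) :
    swapWord m o K (j + 1) ++ w =
      List.replicate j m ++ m :: m :: o :: m :: (List.replicate (K - 1 - j) m ++ w) := by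
  have : K + 1 - (j + 1) = K - 1 - j + 1 := by lia
  rw [swapWord, this, List.replicate_succ' (n := j + 1), List.replicate_succ' (n := j)]
  simp [List.replicate_succ]

variable [Fintype Λ] {g : ℝ} {C p : Language Λ} {N k : ℕ} {α : List Λ}

lemma IsDominant.exists_isSwapPair (hg : g < 1) (hp : W.IsLower p) (hdom : W.IsDominant g p) :
    ∃ m o, W.IsSwapPair (loops p) m o := by
  have hne : (loops p).Nonempty := nonempty_of_weight_eq_one hdom.2
  obtain ⟨a, ha⟩ := hne
  obtain ⟨o, ho, hoa⟩ := W.exists_unit_le a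
  have hop : o ∈ loops p := hp.forall_mem_loops_of_le hoa (by simpa using ha) o (by simp)
  obtain ⟨m, hm, hmax⟩ := (loops p).exists_max_image W.sz ⟨a, ha⟩
  refine ⟨m, o, hm, hop, ?_, hmax, ho⟩
  rintro rfl
  have hsingle : loops p = {m} := Finset.eq_singleton_iff_unique_mem.2
    ⟨hm, fun b hb ↦ W.unit_unique (le_antisymm (ho ▸ hmax b hb) (W.sz_pos b)) ho⟩
  have := hdom.2
  simp only [weight, hsingle, Finset.sum_singleton, ho, pow_one] at this
  exact hg.ne this

open Classical in
/-- The part of `swapBlock` that follows the first block: a swap word, if `L` has a swap pair, and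
a second block. -/
noncomputable def swapTail (W : WordOrder Λ) (K N : ℕ) (L : Finset Λ) : List Λ :=
  if h : ∃ x : Λ × Λ, W.IsSwapPair L x.1 x.2 then
    swapWord h.choose.1 h.choose.2 K 0 ++ W.block N L else []

/-- The factor that has to be read in a dominant state with loop alphabet `L` in order to apply
the swaps. -/
noncomputable def swapBlock (W : WordOrder Λ) (K N : ℕ) (L : Finset Λ) : List Λ :=
  W.block N L ++ W.swapTail K N L

lemma exists_isSwapPair_swapTail_eq (h : ∃ m o, W.IsSwapPair L m o) (K N : ℕ) :
    ∃ m o, W.IsSwapPair L m o ∧ W.swapTail K N L = swapWord m o K 0 ++ W.block N L := by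
  have h' : ∃ x : Λ × Λ, W.IsSwapPair L x.1 x.2 := Prod.exists.2 h
  exact ⟨_, _, h'.choose_spec, dif_pos h'⟩

lemma mem_of_mem_swapTail {a : Λ} (ha : a ∈ W.swapTail K N L) : a ∈ L := by
  unfold swapTail at ha
  split_ifs at ha with h
  · exact (List.mem_append.1 ha).elim h.choose_spec.mem_of_mem_swapWord mem_of_mem_block
  · simp at ha

lemma mem_of_mem_swapBlock {a : Λ} (ha : a ∈ W.swapBlock K N L) : a ∈ L :=
  (List.mem_append.1 ha).elim mem_of_mem_block mem_of_mem_swapTail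

lemma swapBlock_ne_nil (hL : L.Nonempty) : W.swapBlock K N L ≠ [] := by
  obtain ⟨x, hx⟩ := hL
  have hsz : 0 < W.maxSize := (W.sz_pos x).trans_le (Finset.le_sup (Finset.mem_univ x))
  have hlen := le_length_wordPow (R := L.toList) (List.ne_nil_of_mem (Finset.mem_toList.2 hx))
    (W.maxSize + N)
  refine List.append_ne_nil_of_left_ne_nil (List.ne_nil_of_length_pos ?_) _
  exact (by lia : 0 < W.maxSize + N).trans_le hlen

/-- Wilf equivalence of words, expressed by the numbers of words containing them. -/
def WilfEquiv (W : WordOrder Λ) (C : Language Λ) (α β : List Λ) : Prop :=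
  ∀ n, (W.containing C α n).ncard = (W.containing C β n).ncard

/-- The word obtained from `u b b w`, for the block `b` over `L`, by the insertion of the `j`th swap
word between the two blocks. -/
noncomputable def swapVariant (W : WordOrder Λ) (N : ℕ) (L : Finset Λ) (m o : Λ) (K : ℕ)
    (u w : List Λ) (j : ℕ) : List Λ :=
  u ++ (W.block N L ++ (swapWord m o K j ++ (W.block N L ++ w)))

section SwapVariant

variable {u w : List Λ}

lemma swapVariant_injective (h : m ≠ o) :
    Function.Injective (W.swapVariant N L m o K u w) := fun _ _ hij ↦
  swapWord_injective h K
    (List.append_cancel_right (List.append_cancel_left (List.append_cancel_left hij)))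

lemma size_swapVariant {i j : ℕ} (hi : i ≤ K) (hj : j ≤ K) :
    W.size (W.swapVariant N L m o K u w i) = W.size (W.swapVariant N L m o K u w j) := by
  have h := (size_swapWord (W := W) (m := m) (o := o) hi).trans (size_swapWord hj).symm
  simp only [size] at h
  simp only [swapVariant, size, List.map_append, List.sum_append, h]

lemma IsSwapPair.swapVariant_mem_iff (hs : W.IsSwapPair (loops (C.leftQuotient u)) m o)
    (j : ℕ) :
    W.swapVariant N (loops (C.leftQuotient u)) m o K u w j ∈ C ↔
      W.block N (loops (C.leftQuotient u)) ++ w ∈ C.leftQuotient u := by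
  rw [swapVariant, ← Language.mem_leftQuotient, append_mem_iff fun _ ↦ mem_of_mem_block,
    append_mem_iff fun _ ↦ hs.mem_of_mem_swapWord]

lemma IsSwapPair.wilfEquiv_succ (hs : W.IsSwapPair (loops (C.leftQuotient u)) m o)
    (hC : W.IsTame g N C) (hch : ¬ W.HasChain g (k + 1) C)
    (hdom : W.IsDominant g (C.leftQuotient u))
    (hw : W.FollowsChain g (W.block N) k (C.leftQuotient u)
      (W.block N (loops (C.leftQuotient u)) ++ w)) {j : ℕ} (hj : j < K) :
    W.WilfEquiv C (W.swapVariant N (loops (C.leftQuotient u)) m o K u w j)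
      (W.swapVariant N (loops (C.leftQuotient u)) m o K u w (j + 1)) := by
  intro n
  have hmem (r : ℕ) : ∀ a ∈ List.replicate r m, a ∈ loops (C.leftQuotient u) := fun a ha ↦
    List.eq_of_mem_replicate ha ▸ hs.max_mem
  have hne := (nonempty_of_weight_eq_one hdom.2).ne_empty
  have hsite : W.IsSwapSite g N k C u
      (wordPow (loops (C.leftQuotient u)).toList W.maxSize ++ List.replicate j m) m
      (List.replicate (K - 1 - j) m ++ (W.block N (loops (C.leftQuotient u)) ++ w)) :=
    { isTame := hC
      not_hasChain := hch
      isDominant := hdom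
      followsChain := hw.loops_append (hmem _)
      mem_loops := List.forall_mem_cons.2 ⟨hs.max_mem, List.forall_mem_append.2
        ⟨fun a ha ↦ Finset.mem_toList.1 (mem_of_mem_wordPow ha), hmem j⟩⟩
      sz_le := hs.sz_le
      maxSize_le := by
        have := le_length_wordPow (R := (loops (C.leftQuotient u)).toList) (by simpa) W.maxSize
        simp only [List.length_append]
        lia }
  have hswap := hsite.ncard_containing_swap hs.unit_mem hs.sz_unit n
  rw [swapVariant, swapVariant, swapWord_append_eq m o hj, swapWord_succ_append_eq m o hj]
  simpa [anchor, block, wordPow_add, Nat.add_comm W.maxSize N] using hswap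

lemma IsSwapPair.wilfEquiv_zero (hs : W.IsSwapPair (loops (C.leftQuotient u)) m o)
    (hC : W.IsTame g N C) (hch : ¬ W.HasChain g (k + 1) C)
    (hdom : W.IsDominant g (C.leftQuotient u))
    (hw : W.FollowsChain g (W.block N) k (C.leftQuotient u)
      (W.block N (loops (C.leftQuotient u)) ++ w)) {j : ℕ} (hj : j ≤ K) :
    W.WilfEquiv C (W.swapVariant N (loops (C.leftQuotient u)) m o K u w j)
      (W.swapVariant N (loops (C.leftQuotient u)) m o K u w 0) := by
  induction j with
  | zero => exact fun _ ↦ rfl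
  | succ j ih =>
    exact fun n ↦ (hs.wilfEquiv_succ hC hch hdom hw hj n).symm.trans (ih (by lia) n)

end SwapVariant

theorem FollowsChain.exists_wilfEquiv (hC : W.IsTame g N C) (hg : g < 1)
    (hch : ¬ W.HasChain g (k + 1) C) (hα : α ∈ C)
    (h : W.FollowsChain g (W.swapBlock K N) k C α) :
    ∃ f : ℕ → List Λ, Function.Injective f ∧
      ∀ j ≤ K, f j ∈ C ∧ W.size (f j) = W.size α ∧ W.WilfEquiv C (f j) α := by
  have hblock (L : Finset Λ) : W.swapBlock K N L = W.block N L ++ W.swapTail K N L := rfl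
  obtain ⟨u, w, hdom, rfl, hw⟩ := h.exists_eq_append (fun _ _ ↦ mem_of_mem_swapTail) hblock
  obtain ⟨m, o, hs, htail⟩ := exists_isSwapPair_swapTail_eq
    (hdom.exists_isSwapPair hg (hC.isLower.leftQuotient u)) K N
  have hzero : u ++ (W.swapBlock K N (loops (C.leftQuotient u)) ++ w) =
      W.swapVariant N (loops (C.leftQuotient u)) m o K u w 0 := by
    simp [hblock, htail, swapVariant]
  rw [hzero] at hα ⊢
  exact ⟨_, swapVariant_injective hs.ne, fun j hj ↦
    ⟨(hs.swapVariant_mem_iff j).2 ((hs.swapVariant_mem_iff 0).1 hα), size_swapVariant hj K.zero_le,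
      hs.wilfEquiv_zero hC hch hdom hw hj⟩⟩

end ManyEquivalent

/-! ### Growth of languages -/

open Finset.HasAntidiagonal

section GeneratingFunction

variable {Λ : Type*} {W : WordOrder Λ} {g : ℝ} {A B : Language Λ} {w : List Λ}

/-- The generating function of `A`, by size, evaluated at `g`. -/
noncomputable def genFun (W : WordOrder Λ) (g : ℝ) (A : Language Λ) : ENNReal :=
  ∑' w : {w | w ∈ A}, ENNReal.ofReal g ^ W.size w

/-- The words of size `n` in `A`. -/
def ofSize (W : WordOrder Λ) (A : Language Λ) (n : ℕ) : Language Λ :=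
  {w | w ∈ A ∧ W.size w = n}

lemma ofSize_le (A : Language Λ) (n : ℕ) : W.ofSize A n ≤ A := fun _ h ↦ h.1

lemma ofSize_mono (h : A ≤ B) (n : ℕ) : W.ofSize A n ≤ W.ofSize B n := fun _ hw ↦ ⟨h hw.1, hw.2⟩

lemma genFun_mono (h : A ≤ B) : W.genFun g A ≤ W.genFun g B :=
  ENNReal.tsum_mono_subtype (fun w ↦ ENNReal.ofReal g ^ W.size w) fun _ hw ↦ h hw

lemma genFun_zero : W.genFun g 0 = 0 := by
  have : IsEmpty {w : List Λ | w ∈ (0 : Language Λ)} := ⟨fun w ↦ Language.notMem_zero w.1 w.2⟩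
  exact tsum_empty

lemma genFun_singleton (w : List Λ) : W.genFun g {w} = ENNReal.ofReal g ^ W.size w :=
  tsum_singleton w fun w ↦ ENNReal.ofReal g ^ W.size w

lemma genFun_one : W.genFun g 1 = 1 := (genFun_singleton []).trans (by simp)

lemma genFun_add_le (A B : Language Λ) : W.genFun g (A + B) ≤ W.genFun g A + W.genFun g B :=
  ENNReal.tsum_union_le (fun w ↦ ENNReal.ofReal g ^ W.size w) {w | w ∈ A} {w | w ∈ B}

lemma genFun_sum_le {ι : Type*} (s : Finset ι) (A : ι → Language Λ) :
    W.genFun g (∑ i ∈ s, A i) ≤ ∑ i ∈ s, W.genFun g (A i) :=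
  Finset.le_sum_of_subadditive _ genFun_zero.le genFun_add_le _ _

lemma genFun_mul_le (A B : Language Λ) :
    W.genFun g (A * B) ≤ W.genFun g A * W.genFun g B := by
  let f (x : {w | w ∈ A} × {w | w ∈ B}) : {w | w ∈ A * B} :=
    ⟨x.1.1 ++ x.2.1, Language.append_mem_mul x.1.2 x.2.2⟩
  have hf : f.Surjective := by
    rintro ⟨w, hw⟩
    obtain ⟨a, ha, b, hb, rfl⟩ := Language.mem_mul.1 hw
    exact ⟨(⟨a, ha⟩, ⟨b, hb⟩), rfl⟩
  calc W.genFun g (A * B) ≤ ∑' x, ENNReal.ofReal g ^ W.size (f x).1 :=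
        ENNReal.tsum_le_tsum_comp_of_surjective hf _
    _ = W.genFun g A * W.genFun g B := by
        simp only [f, size_append, pow_add, ENNReal.tsum_prod', ENNReal.tsum_mul_left,
          ENNReal.tsum_mul_right, genFun]

lemma genFun_pow_le (A : Language Λ) (n : ℕ) : W.genFun g (A ^ n) ≤ W.genFun g A ^ n := by
  induction n with
  | zero => simp [genFun_one]
  | succ n ih =>
    rw [pow_succ, pow_succ]
    exact (genFun_mul_le _ _).trans (by gcongr)

lemma genFun_kstar_ne_top (h : W.genFun g A < 1) : W.genFun g (KStar.kstar A) ≠ ⊤ := by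
  let f (w : List Λ) : ENNReal := ENNReal.ofReal g ^ W.size w
  have hsub : {w | w ∈ KStar.kstar A} ⊆ ⋃ n : ℕ, {w | w ∈ A ^ n} := fun w hw ↦ by
    rw [Language.kstar_eq_iSup_pow] at hw
    exact Set.mem_iUnion.2 (Language.mem_iSup.1 hw)
  have hle : W.genFun g (KStar.kstar A) ≤ ∑' n, W.genFun g A ^ n :=
    calc W.genFun g (KStar.kstar A)
        ≤ ∑' w : (⋃ n : ℕ, {w | w ∈ A ^ n} : Set (List Λ)), f w :=
          ENNReal.tsum_mono_subtype f hsub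
      _ ≤ ∑' n, W.genFun g (A ^ n) := ENNReal.tsum_iUnion_le_tsum f fun n : ℕ ↦ {w | w ∈ A ^ n}
      _ ≤ ∑' n, W.genFun g A ^ n := ENNReal.tsum_le_tsum (genFun_pow_le A)
  refine ne_top_of_le_ne_top ?_ hle
  rw [ENNReal.tsum_geometric]
  exact ENNReal.inv_ne_top.2 (tsub_pos_iff_lt.2 h).ne'

lemma genFun_add_singleton (hw : w ∉ A) :
    W.genFun g (A + {w}) = W.genFun g A + ENNReal.ofReal g ^ W.size w := by
  rw [← genFun_singleton w]
  exact ENNReal.summable.tsum_union_disjoint (f := fun w ↦ ENNReal.ofReal g ^ W.size w)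
    (s := {v | v ∈ A}) (t := {w}) (Set.disjoint_singleton_right.2 hw) ENNReal.summable

lemma tsum_genFun_ofSize_le (A : Language Λ) :
    ∑' n, W.genFun g (W.ofSize A n) ≤ W.genFun g A := by
  let f (x : Σ n, {w | w ∈ W.ofSize A n}) : {w | w ∈ A} := ⟨x.2.1, x.2.2.1⟩
  have hf : f.Injective := by
    rintro ⟨_, w, hw, rfl⟩ ⟨_, w', hw', rfl⟩ h
    obtain rfl : w = w' := congrArg Subtype.val h
    rfl
  exact (ENNReal.tsum_sigma' _).symm.trans_le
    (ENNReal.tsum_comp_le_tsum_of_injective hf fun w ↦ ENNReal.ofReal g ^ W.size w)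

lemma genFun_ofSize_mul_le (A B : Language Λ) (n : ℕ) :
    W.genFun g (W.ofSize (A * B) n) ≤ ∑ x ∈ antidiagonal n,
      W.genFun g (W.ofSize A x.1) * W.genFun g (W.ofSize B x.2) := by
  have hle : W.ofSize (A * B) n ≤
      ∑ x ∈ antidiagonal n, W.ofSize A x.1 * W.ofSize B x.2 := by
    rintro w ⟨hw, hn⟩
    obtain ⟨a, ha, b, hb, rfl⟩ := Language.mem_mul.1 hw
    have hmem : (W.size a, W.size b) ∈ antidiagonal n :=
      mem_antidiagonal.2 (by rw [← hn, size_append])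
    exact Finset.single_le_sum_of_canonicallyOrdered
      (f := fun x : ℕ × ℕ ↦ W.ofSize A x.1 * W.ofSize B x.2) hmem
      (Language.append_mem_mul ⟨ha, rfl⟩ ⟨hb, rfl⟩)
  exact (genFun_mono hle).trans ((genFun_sum_le _ _).trans
    (Finset.sum_le_sum fun x _ ↦ genFun_mul_le _ _))

end GeneratingFunction

section GrowthOrder

variable {Λ : Type*} {W : WordOrder Λ} {g : ℝ} {A B : Language Λ} {j k : ℕ}

/-- The generating function of `A` has at `g` at most the growth of a pole of order `k`: it
converges if `k = 0`, and its `n`th term is `O(n ^ (k - 1))` if `k > 0`. -/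
def HasPoleLE (W : WordOrder Λ) (g : ℝ) : ℕ → Language Λ → Prop
  | 0, A => W.genFun g A ≠ ⊤
  | k + 1, A => ∃ c : ENNReal, c ≠ ⊤ ∧ ∀ n : ℕ, W.genFun g (W.ofSize A n) ≤ c * (n + 1) ^ k

namespace HasPoleLE

lemma mono (h : W.HasPoleLE g k B) (hAB : A ≤ B) : W.HasPoleLE g k A := by
  cases k with
  | zero => exact ne_top_of_le_ne_top h (genFun_mono hAB)
  | succ k =>
    obtain ⟨c, hc, h⟩ := h
    exact ⟨c, hc, fun n ↦ (genFun_mono (ofSize_mono hAB n)).trans (h n)⟩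

lemma zero : W.HasPoleLE g k 0 := by
  cases k with
  | zero => simp [HasPoleLE, genFun_zero]
  | succ k =>
    exact ⟨0, ENNReal.zero_ne_top, fun n ↦ by
      simpa [genFun_zero] using genFun_mono (W := W) (g := g) (ofSize_le (W := W) 0 n)⟩

lemma add (hA : W.HasPoleLE g k A) (hB : W.HasPoleLE g k B) : W.HasPoleLE g k (A + B) := by
  cases k with
  | zero => exact ne_top_of_le_ne_top (ENNReal.add_ne_top.2 ⟨hA, hB⟩) (genFun_add_le A B)
  | succ k =>
    obtain ⟨c, hc, hA⟩ := hA
    obtain ⟨d, hd, hB⟩ := hB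
    refine ⟨c + d, ENNReal.add_ne_top.2 ⟨hc, hd⟩, fun n ↦ ?_⟩
    have hle : W.ofSize (A + B) n ≤ W.ofSize A n + W.ofSize B n := fun w ⟨hw, hn⟩ ↦
      hw.imp (⟨·, hn⟩) (⟨·, hn⟩)
    rw [add_mul]
    exact (genFun_mono hle).trans ((genFun_add_le _ _).trans (add_le_add (hA n) (hB n)))

lemma sum {ι : Type*} (s : Finset ι) {A : ι → Language Λ} (h : ∀ i ∈ s, W.HasPoleLE g k (A i)) :
    W.HasPoleLE g k (∑ i ∈ s, A i) :=
  Finset.sum_induction A (W.HasPoleLE g k) (fun _ _ ↦ add) zero h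

lemma succ (h : W.HasPoleLE g k A) : W.HasPoleLE g (k + 1) A := by
  cases k with
  | zero => exact ⟨W.genFun g A, h, fun n ↦ by simpa using genFun_mono (ofSize_le A n)⟩
  | succ k =>
    obtain ⟨c, hc, h⟩ := h
    exact ⟨c, hc, fun n ↦ (h n).trans (by gcongr <;> simp)⟩

lemma of_le (h : W.HasPoleLE g j A) (hjk : j ≤ k) : W.HasPoleLE g k A := by
  induction k, hjk using Nat.le_induction with
  | base => exact h
  | succ k _ ih => exact ih.succ

end HasPoleLE

lemma sum_antidiagonal_mul_le {a b : ℕ → ENNReal} {c : ENNReal} {n : ℕ}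
    (hb : ∀ j ≤ n, b j ≤ c) : ∑ x ∈ antidiagonal n, a x.1 * b x.2 ≤ (∑' i, a i) * c := by
  calc ∑ x ∈ antidiagonal n, a x.1 * b x.2
      ≤ ∑ x ∈ antidiagonal n, a x.1 * c := by
        gcongr with x hx
        exact hb _ (by have := mem_antidiagonal.1 hx; lia)
    _ = (∑ i ∈ Finset.range (n + 1), a i) * c := by
        rw [← Finset.sum_mul, Finset.Nat.sum_antidiagonal_eq_sum_range_succ_mk]
    _ ≤ (∑' i, a i) * c := by
        gcongr
        exact ENNReal.sum_le_tsum _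

lemma HasPoleLE.zero_mul (hA : W.HasPoleLE g 0 A) (hB : W.HasPoleLE g k B) :
    W.HasPoleLE g k (A * B) := by
  cases k with
  | zero => exact ne_top_of_le_ne_top (ENNReal.mul_ne_top hA hB) (genFun_mul_le A B)
  | succ k =>
    obtain ⟨c, hc, hB⟩ := hB
    refine ⟨W.genFun g A * c, ENNReal.mul_ne_top hA hc, fun n ↦ ?_⟩
    have hB' : ∀ j ≤ n, W.genFun g (W.ofSize B j) ≤ c * (n + 1) ^ k := fun j hj ↦
      (hB j).trans (by gcongr)
    refine (genFun_ofSize_mul_le A B n).trans <|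
      (sum_antidiagonal_mul_le (a := fun i ↦ W.genFun g (W.ofSize A i)) hB').trans ?_
    rw [mul_assoc]
    gcongr
    exact tsum_genFun_ofSize_le A

lemma HasPoleLE.one_mul (hA : W.HasPoleLE g 1 A) (hB : W.HasPoleLE g k B) :
    W.HasPoleLE g (k + 1) (A * B) := by
  obtain ⟨c, hc, hA⟩ := hA
  simp only [pow_zero, mul_one] at hA
  cases k with
  | zero =>
    refine ⟨c * W.genFun g B, ENNReal.mul_ne_top hc hB, fun n ↦ ?_⟩
    refine (genFun_ofSize_mul_le A B n).trans ?_
    rw [← Finset.Nat.sum_antidiagonal_swap]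
    simp only [Prod.fst_swap, Prod.snd_swap, mul_comm (W.genFun g (W.ofSize A _))]
    refine (sum_antidiagonal_mul_le (a := fun i ↦ W.genFun g (W.ofSize B i))
      (b := fun j ↦ W.genFun g (W.ofSize A j)) fun j _ ↦ hA j).trans ?_
    rw [pow_zero, mul_one, mul_comm c]
    gcongr
    exact tsum_genFun_ofSize_le B
  | succ k =>
    obtain ⟨d, hd, hB⟩ := hB
    refine ⟨c * d, ENNReal.mul_ne_top hc hd, fun n ↦ (genFun_ofSize_mul_le A B n).trans ?_⟩
    calc ∑ x ∈ antidiagonal n, W.genFun g (W.ofSize A x.1) * W.genFun g (W.ofSize B x.2)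
        ≤ ∑ x ∈ antidiagonal n, c * (d * (n + 1) ^ k) := by
          gcongr with x hx
          · exact hA _
          · refine (hB _).trans ?_
            gcongr
            have := mem_antidiagonal.1 hx
            lia
      _ = c * d * (n + 1) ^ (k + 1) := by
          rw [Finset.sum_const, Finset.Nat.card_antidiagonal, nsmul_eq_mul]
          push_cast
          ring

end GrowthOrder

section Words

variable {Λ : Type*} {W : WordOrder Λ} {g : ℝ} {L : Finset Λ} {w V : List Λ}

/-- The one-letter words over the alphabet `L`. -/
def letters (L : Finset Λ) : Language Λ := ∑ a ∈ L, {[a]}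

/-- The words over the alphabet `L`. -/
def words (L : Finset Λ) : Language Λ := {w | ∀ a ∈ w, a ∈ L}

/-- The words over `L` that do not contain `V` as a factor. -/
def wordsAvoiding (L : Finset Λ) (V : List Λ) : Language Λ := {w | w ∈ words L ∧ ¬ V <:+: w}

lemma singleton_le_letters {a : Λ} (ha : a ∈ L) : ({[a]} : Language Λ) ≤ letters L :=
  Finset.single_le_sum_of_canonicallyOrdered (f := fun a ↦ ({[a]} : Language Λ)) ha

lemma mem_letters_pow_length (hw : w ∈ words L) : w ∈ letters L ^ w.length := by
  induction w with
  | nil => exact Language.nil_mem_one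
  | cons a w ih =>
    obtain ⟨ha, hw⟩ := List.forall_mem_cons.1 hw
    rw [List.length_cons, pow_succ']
    exact Language.append_mem_mul (singleton_le_letters ha rfl) (ih hw)

lemma words_le_kstar_letters (L : Finset Λ) : words L ≤ KStar.kstar (letters L) := fun w hw ↦
  (show letters L ^ w.length ≤ _ from pow_le_kstar) (mem_letters_pow_length hw)

lemma genFun_letters_le (hg : 0 ≤ g) (L : Finset Λ) :
    W.genFun g (letters L) ≤ ENNReal.ofReal (W.weight g L) := by
  refine (genFun_sum_le _ _).trans_eq ?_
  rw [weight, ENNReal.ofReal_sum_of_nonneg fun _ _ ↦ by positivity]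
  simp [genFun_singleton, ENNReal.ofReal_pow hg]

lemma hasPoleLE_zero_words (hg : 0 ≤ g) (hL : W.weight g L < 1) : W.HasPoleLE g 0 (words L) :=
  .mono (genFun_kstar_ne_top ((genFun_letters_le hg L).trans_lt (ENNReal.ofReal_lt_one.2 hL)))
    (words_le_kstar_letters L)

lemma genFun_ofSize_words_le_one (hg : 0 ≤ g) (hL : W.weight g L ≤ 1) (n : ℕ) :
    W.genFun g (W.ofSize (words L) n) ≤ 1 := by
  induction n using Nat.strong_induction_on with
  | _ n ih =>
    rcases n.eq_zero_or_pos with rfl | hpos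
    · refine (genFun_mono fun w hw ↦ ?_).trans_eq genFun_one
      exact List.eq_nil_of_length_eq_zero (Nat.le_zero.1 ((W.length_le_size w).trans_eq hw.2))
    have hle : W.ofSize (words L) n ≤
        ∑ a ∈ L, {[a]} * W.ofSize (words L) (n - W.sz a) := by
      rintro (_ | ⟨a, w⟩) ⟨hw, hn⟩
      · exact absurd hn hpos.ne
      · obtain ⟨ha, hw⟩ := List.forall_mem_cons.1 hw
        rw [size_cons] at hn
        exact Finset.single_le_sum_of_canonicallyOrdered
          (f := fun a ↦ ({[a]} : Language Λ) * W.ofSize (words L) (n - W.sz a)) ha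
          (Language.append_mem_mul (a := [a]) rfl ⟨hw, by lia⟩)
    calc W.genFun g (W.ofSize (words L) n)
        ≤ ∑ a ∈ L, W.genFun g ({[a]} * W.ofSize (words L) (n - W.sz a)) :=
          (genFun_mono hle).trans (genFun_sum_le _ _)
      _ ≤ ∑ a ∈ L, ENNReal.ofReal (g ^ W.sz a) * 1 := by
          refine Finset.sum_le_sum fun a _ ↦ (genFun_mul_le _ _).trans ?_
          gcongr
          · simp [genFun_singleton, ENNReal.ofReal_pow hg]
          · exact ih _ (Nat.sub_lt hpos (W.sz_pos a))
      _ = ENNReal.ofReal (W.weight g L) := by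
          rw [weight, ENNReal.ofReal_sum_of_nonneg fun _ _ ↦ by positivity]
          simp
      _ ≤ 1 := ENNReal.ofReal_le_one.2 hL

lemma hasPoleLE_one_words (hg : 0 ≤ g) (hL : W.weight g L ≤ 1) : W.HasPoleLE g 1 (words L) :=
  ⟨1, ENNReal.one_ne_top, fun n ↦ by simpa using genFun_ofSize_words_le_one hg hL n⟩

lemma genFun_letters_pow_sub_lt_one (hg : 0 < g) (hL : W.weight g L ≤ 1)
    (hV : V ∈ words L) : W.genFun g (letters L ^ V.length - {V}) < 1 := by
  set A := letters L ^ V.length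
  have hpow : W.genFun g A ≤ 1 :=
    (genFun_pow_le _ _).trans <| pow_le_one₀ zero_le <|
      (genFun_letters_le hg.le L).trans (ENNReal.ofReal_le_one.2 hL)
  have hle : A - {V} + {V} ≤ A := by
    rintro w (hw | rfl)
    · exact hw.1
    · exact mem_letters_pow_length hV
  have hadd : W.genFun g (A - {V}) + ENNReal.ofReal g ^ W.size V ≤ W.genFun g A :=
    (genFun_add_singleton fun h ↦ h.2 rfl).symm.trans_le (genFun_mono hle)
  refine (ENNReal.lt_add_right ?_ ?_).trans_le (hadd.trans hpow)
  · exact ne_top_of_le_ne_top ENNReal.one_ne_top (le_self_add.trans (hadd.trans hpow))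
  · exact pow_ne_zero _ (ENNReal.ofReal_pos.2 hg).ne'

lemma wordsAvoiding_le (hV : V ≠ []) : wordsAvoiding L V ≤
    KStar.kstar (letters L ^ V.length - {V}) * ∑ i ∈ Finset.range V.length, letters L ^ i := by
  intro w hw
  induction h : w.length using Nat.strong_induction_on generalizing w with
  | _ n ih =>
    obtain ⟨hw, hVw⟩ := hw
    rcases lt_or_ge w.length V.length with hlt | hge
    · rw [← w.nil_append]
      refine Language.append_mem_mul (Language.nil_mem_kstar _) ?_
      exact Finset.single_le_sum_of_canonicallyOrdered (f := fun i ↦ letters L ^ i)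
        (Finset.mem_range.2 hlt) (mem_letters_pow_length hw)
    · obtain ⟨a, b, rfl, ha⟩ : ∃ a b, w = a ++ b ∧ a.length = V.length :=
        ⟨w.take V.length, w.drop V.length, by simp, by simpa using hge⟩
      obtain ⟨haL, hbL⟩ := List.forall_mem_append.1 hw
      have haX : a ∈ letters L ^ V.length - {V} := by
        refine ⟨ha ▸ mem_letters_pow_length haL, ?_⟩
        rintro rfl
        exact hVw (List.prefix_append _ _).isInfix
      have hb := ih b.length (by have := List.length_pos_iff.2 hV; simp_all; lia)
        ⟨hbL, fun h ↦ hVw (h.trans (List.suffix_append _ _).isInfix)⟩ rfl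
      obtain ⟨c, hc, d, hd, rfl⟩ := Language.mem_mul.1 hb
      rw [← List.append_assoc]
      have hmul : ∀ X : Language Λ, X * KStar.kstar X ≤ KStar.kstar X := fun _ ↦
        mul_kstar_le_kstar
      exact Language.append_mem_mul (hmul _ (Language.append_mem_mul haX hc)) hd

lemma hasPoleLE_zero_wordsAvoiding (hg : 0 < g) (hL : W.weight g L ≤ 1)
    (hV : ∀ a ∈ V, a ∈ L) (hne : V ≠ []) : W.HasPoleLE g 0 (wordsAvoiding L V) := by
  have hX : W.HasPoleLE g 0 (KStar.kstar (letters L ^ V.length - {V})) :=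
    genFun_kstar_ne_top (genFun_letters_pow_sub_lt_one hg hL hV)
  refine (hX.zero_mul (.sum _ fun i _ ↦ ?_)).mono (wordsAvoiding_le hne)
  exact ne_top_of_le_ne_top
    (ENNReal.pow_ne_top (ne_top_of_le_ne_top ENNReal.ofReal_ne_top (genFun_letters_le hg.le L)))
    (genFun_pow_le _ i)

end Words

section BadWords

variable {Λ : Type*} [Fintype Λ] {W : WordOrder Λ} {g : ℝ} {V : Finset Λ → List Λ} {k : ℕ}
  {S : Language Λ}

/-- The words in `S` that do not follow a chain of `k + 1` dominant states. -/
def badWords (W : WordOrder Λ) (g : ℝ) (V : Finset Λ → List Λ) (k : ℕ) (S : Language Λ) :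
    Language Λ :=
  {w | w ∈ S ∧ ¬ W.FollowsChain g V k S w}

/-- The words that leave the state `S` with their first letter and are bad from there on; the empty
word stands for never leaving `S`. -/
def exitWords (W : WordOrder Λ) (g : ℝ) (V : Finset Λ → List Λ) (k : ℕ) (S : Language Λ) :
    Language Λ :=
  {w | w = [] ∨ ∃ y w', w = y :: w' ∧ y ∉ loops S ∧ w' ∈ W.badWords g V k (S.leftQuotient [y])}

lemma badWords_le : W.badWords g V k S ≤ words (loops S) * W.exitWords g V k S := by
  rintro w ⟨hw, hbad⟩
  rcases forall_mem_or_exists_first_notMem (loops S) w with hall | ⟨t, y, w, rfl, ht, hy⟩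
  · exact w.append_nil ▸ Language.append_mem_mul hall (Or.inl rfl)
  · refine Language.append_mem_mul ht (Or.inr ⟨y, w, rfl, hy, (append_mem_iff ht).1 hw, ?_⟩)
    exact fun h ↦ hbad (.loops_append ht (.append_left [y] h))

lemma badWords_zero_le (hS : W.IsDominant g S) :
    W.badWords g V 0 S ≤ wordsAvoiding (loops S) (V (loops S)) * W.exitWords g V 0 S := by
  intro w hw
  obtain ⟨t, ht, r, hr, rfl⟩ := Language.mem_mul.1 (badWords_le hw)
  refine Language.append_mem_mul ⟨ht, ?_⟩ hr
  rintro ⟨a, b, rfl⟩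
  have ha : ∀ x ∈ a, x ∈ loops S := fun x hx ↦ ht x (by simp [hx])
  refine hw.2 ?_
  rw [List.append_assoc, List.append_assoc]
  exact .loops_append ha ⟨[], b ++ r, by simpa using hS, by simp⟩

lemma badWords_succ_le (hS : W.IsDominant g S) :
    W.badWords g V (k + 1) S ≤
      wordsAvoiding (loops S) (V (loops S)) * W.exitWords g V (k + 1) S +
        words (loops S) * W.exitWords g V k S := by
  intro w hw
  obtain ⟨t, ht, r, hr, rfl⟩ := Language.mem_mul.1 (badWords_le hw)
  by_cases hV : V (loops S) <:+: t
  · refine Or.inr (Language.append_mem_mul ht ?_)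
    obtain ⟨a, b, rfl⟩ := hV
    rcases hr with rfl | ⟨y, w', rfl, hy, hw'⟩
    · exact Or.inl rfl
    refine Or.inr ⟨y, w', rfl, hy, hw'.1, fun h ↦ hw.2 ?_⟩
    have ha : ∀ x ∈ a, x ∈ loops S := fun x hx ↦ ht x (by simp [hx])
    rw [List.append_assoc, List.append_assoc]
    refine .loops_append ha ⟨[], b, y, w', by simpa using hS, by simp, ?_, by simpa using hy,
      by simpa using h⟩
    exact fun x hx ↦ by simpa using ht x (by simp [hx])
  · exact Or.inl (Language.append_mem_mul ⟨ht, hV⟩ hr)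

lemma hasPoleLE_exitWords
    (h : ∀ y ∉ loops S, W.HasPoleLE g k (W.badWords g V k (S.leftQuotient [y]))) :
    W.HasPoleLE g k (W.exitWords g V k S) := by
  classical
  let A : Language Λ := ∑ y with y ∉ loops S, {[y]} * W.badWords g V k (S.leftQuotient [y])
  have hA : W.exitWords g V k S ≤ 1 + A := by
    rintro w (rfl | ⟨y, w, rfl, hy, hw⟩)
    · exact Or.inl rfl
    · exact Or.inr (Finset.single_le_sum_of_canonicallyOrdered
        (f := fun y ↦ {[y]} * W.badWords g V k (S.leftQuotient [y])) (by simpa using hy)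
        (Language.append_mem_mul (a := [y]) rfl hw))
  have hone : W.HasPoleLE g 0 1 := by simp [HasPoleLE, genFun_one]
  refine ((hone.of_le k.zero_le).add (.sum _ fun y hy ↦ ?_)).mono hA
  refine .zero_mul ?_ (h y (by simpa using hy))
  exact ne_of_eq_of_ne (genFun_singleton [y]) (ENNReal.pow_ne_top ENNReal.ofReal_ne_top)

theorem hasPoleLE_badWords (hg : 0 < g) (hS : W.IsLower S)
    (hweight : ∀ u, [] ∈ S.leftQuotient u → W.weight g (loops (S.leftQuotient u)) ≤ 1)
    (hV : ∀ L, ∀ a ∈ V L, a ∈ L) (hne : ∀ L, W.weight g L = 1 → V L ≠ []) (k : ℕ) :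
    W.HasPoleLE g k (W.badWords g V k S) := by
  revert k hweight
  refine IsLower.leftQuotient_induction (W := W) (P := fun S ↦
    (∀ u, [] ∈ S.leftQuotient u → W.weight g (loops (S.leftQuotient u)) ≤ 1) →
      ∀ k, W.HasPoleLE g k (W.badWords g V k S)) (fun S hS ih hweight k ↦ ?_) hS
  have hexit : ∀ j, W.HasPoleLE g j (W.exitWords g V j S) := fun j ↦
    hasPoleLE_exitWords fun y hy ↦ ih y hy
      (fun u ↦ by simpa only [Language.leftQuotient_append] using hweight ([y] ++ u)) j
  by_cases hnil : [] ∈ S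
  swap
  · exact HasPoleLE.zero.mono fun w hw ↦ absurd (hS.nil_mem hw.1) hnil
  have hle : W.weight g (loops S) ≤ 1 := by simpa using hweight [] (by simpa using hnil)
  rcases hle.lt_or_eq with hlt | heq
  · exact ((hasPoleLE_zero_words hg.le hlt).zero_mul (hexit k)).mono badWords_le
  have havoid := hasPoleLE_zero_wordsAvoiding hg hle (hV (loops S)) (hne _ heq)
  cases k with
  | zero => exact (havoid.zero_mul (hexit 0)).mono (badWords_zero_le ⟨hnil, heq⟩)
  | succ k =>
    exact ((havoid.zero_mul (hexit (k + 1))).add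
      ((hasPoleLE_one_words hg.le hle).one_mul (hexit k))).mono (badWords_succ_le ⟨hnil, heq⟩)

end BadWords

/-! ### Lower bounds and counting -/

section Unambiguous

variable {Λ : Type*} {W : WordOrder Λ} {g : ℝ} {S : Language Λ}

lemma sum_genFun_mul_le {ι : Type*} [Fintype ι] {A B : ι → Language Λ}
    (hmem : ∀ i, A i * B i ≤ S)
    (hinj : ∀ i j a a' b b', a ∈ A i → a' ∈ A j → b ∈ B i → b' ∈ B j → a ++ b = a' ++ b' →
      i = j ∧ a = a' ∧ b = b') :
    ∑ i, W.genFun g (A i) * W.genFun g (B i) ≤ W.genFun g S := by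
  let f (x : Σ i, {w | w ∈ A i} × {w | w ∈ B i}) : {w | w ∈ S} :=
    ⟨x.2.1.1 ++ x.2.2.1, hmem x.1 (Language.append_mem_mul x.2.1.2 x.2.2.2)⟩
  have hf : f.Injective := by
    rintro ⟨i, ⟨a, ha⟩, b, hb⟩ ⟨j, ⟨a', ha'⟩, b', hb'⟩ h
    obtain ⟨rfl, rfl, rfl⟩ := hinj i j a a' b b' ha ha' hb hb' (congrArg Subtype.val h)
    rfl
  calc ∑ i, W.genFun g (A i) * W.genFun g (B i)
      = ∑' x, ENNReal.ofReal g ^ W.size (f x).1 := by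
        simp only [f, size_append, pow_add, ENNReal.tsum_sigma', ENNReal.tsum_prod',
          ENNReal.tsum_mul_left, ENNReal.tsum_mul_right, genFun, tsum_fintype]
    _ ≤ W.genFun g S :=
        ENNReal.tsum_comp_le_tsum_of_injective hf fun w ↦ ENNReal.ofReal g ^ W.size w

lemma mul_genFun_le_genFun_singleton_mul (u : List Λ) (A : Language Λ) :
    ENNReal.ofReal g ^ W.size u * W.genFun g A ≤ W.genFun g ({u} * A) := by
  rw [← genFun_singleton]
  refine (Fintype.sum_unique fun _ : Unit ↦ _).symm.trans_le (sum_genFun_mul_le (ι := Unit)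
    (A := fun _ ↦ {u}) (B := fun _ ↦ A) (fun _ ↦ le_rfl) ?_)
  rintro _ _ _ _ b b' rfl rfl - - h
  exact ⟨rfl, rfl, List.append_cancel_left h⟩

lemma mul_genFun_ofSize_leftQuotient_le (u : List Λ) (n : ℕ) :
    ENNReal.ofReal g ^ W.size u * W.genFun g (W.ofSize (S.leftQuotient u) n) ≤
      W.genFun g (W.ofSize S (n + W.size u)) := by
  refine (mul_genFun_le_genFun_singleton_mul u _).trans (genFun_mono fun w hw ↦ ?_)
  obtain ⟨_, rfl, b, ⟨hb, hn⟩, rfl⟩ := Language.mem_mul.1 hw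
  exact ⟨hb, by rw [size_append, hn, add_comm]⟩

lemma pow_size_le_genFun_ofSize {w : List Λ} (hw : w ∈ S) :
    ENNReal.ofReal g ^ W.size w ≤ W.genFun g (W.ofSize S (W.size w)) := by
  rw [← genFun_singleton]
  refine genFun_mono fun v hv ↦ ?_
  obtain rfl : v = w := hv
  exact ⟨hw, rfl⟩

end Unambiguous

section LowerBounds

variable {Λ : Type*} [Fintype Λ] {W : WordOrder Λ} {g : ℝ} {S : Language Λ} {L : Finset Λ}
  {k : ℕ}

lemma le_genFun_ofSize_words (hg : 0 ≤ g) (hg1 : g ≤ 1) (hL : W.weight g L = 1) {o : Λ}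
    (ho : W.sz o = 1) (hoL : o ∈ L) (n : ℕ) :
    ENNReal.ofReal g ^ W.maxSize ≤ W.genFun g (W.ofSize (words L) n) := by
  induction n using Nat.strong_induction_on with
  | _ n ih =>
    rcases le_or_gt n W.maxSize with hn | hn
    · have hmem : List.replicate n o ∈ words L := fun a ha ↦ List.eq_of_mem_replicate ha ▸ hoL
      have hsize : W.size (List.replicate n o) = n := by simp [size, ho]
      calc ENNReal.ofReal g ^ W.maxSize ≤ ENNReal.ofReal g ^ n :=
            pow_le_pow_right_of_le_one' (ENNReal.ofReal_le_one.2 hg1) hn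
        _ ≤ W.genFun g (W.ofSize (words L) n) := by
            simpa only [hsize] using pow_size_le_genFun_ofSize (W := W) (g := g) hmem
    · have hsz (a : Λ) : W.sz a < n := (Finset.le_sup (Finset.mem_univ a)).trans_lt hn
      calc ENNReal.ofReal g ^ W.maxSize
          = ∑ a : L, ENNReal.ofReal (g ^ W.sz a) * ENNReal.ofReal g ^ W.maxSize := by
            rw [← Finset.sum_mul, ← ENNReal.ofReal_sum_of_nonneg fun _ _ ↦ by positivity,
              Finset.sum_coe_sort L fun a ↦ g ^ W.sz a, ← weight, hL]
            simp
        _ ≤ ∑ a : L, W.genFun g {[a.1]} * W.genFun g (W.ofSize (words L) (n - W.sz a)) := by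
            gcongr with a
            · simp [genFun_singleton, ENNReal.ofReal_pow hg]
            · exact ih _ (Nat.sub_lt (by lia) (W.sz_pos a))
        _ ≤ W.genFun g (W.ofSize (words L) n) := by
            refine sum_genFun_mul_le (fun a w hw ↦ ?_) ?_
            · obtain ⟨_, rfl, w, ⟨hwL, hn⟩, rfl⟩ := Language.mem_mul.1 hw
              refine ⟨List.forall_mem_cons.2 ⟨a.2, hwL⟩, ?_⟩
              have := hsz a
              simp only [List.singleton_append, size_cons, hn]
              lia
            · rintro a a' _ _ b b' rfl rfl - - h
              obtain ⟨haa', hbb'⟩ := List.cons_eq_cons.1 h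
              exact ⟨Subtype.ext haa', by rw [haa'], hbb'⟩

lemma IsDominant.le_genFun_ofSize (hg : 0 ≤ g) (hg1 : g ≤ 1) (hS : W.IsLower S)
    (hdom : W.IsDominant g S) (n : ℕ) :
    ENNReal.ofReal g ^ W.maxSize ≤ W.genFun g (W.ofSize (words (loops S)) n) := by
  obtain ⟨x, hx⟩ := nonempty_of_weight_eq_one hdom.2
  obtain ⟨o, ho, hle⟩ := W.exists_unit_le x
  exact le_genFun_ofSize_words hg hg1 hdom.2 ho
    (hS.forall_mem_loops_of_le hle (by simpa using hx) o (by simp)) n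

lemma sum_genFun_words_mul_le {y : Λ} (hy : y ∉ loops S) (n m : ℕ) :
    ∑ i : Fin (n + 1), W.genFun g (W.ofSize (words (loops S)) (n - i)) *
      (ENNReal.ofReal g ^ W.size [y] * W.genFun g (W.ofSize (S.leftQuotient [y]) (i + m))) ≤
        W.genFun g (W.ofSize S (n + (m + W.size [y]))) := by
  calc _ ≤ ∑ i : Fin (n + 1), W.genFun g (W.ofSize (words (loops S)) (n - i)) *
        W.genFun g ({[y]} * W.ofSize (S.leftQuotient [y]) (i + m)) := by
        gcongr with i
        exact mul_genFun_le_genFun_singleton_mul [y] _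
    _ ≤ W.genFun g (W.ofSize S (n + (m + W.size [y]))) := by
        refine sum_genFun_mul_le (fun i w hw ↦ ?_) ?_
        · obtain ⟨t, ⟨ht, hn⟩, _, hyr, rfl⟩ := Language.mem_mul.1 hw
          obtain ⟨_, rfl, r, ⟨hr, hm⟩, rfl⟩ := Language.mem_mul.1 hyr
          refine ⟨(append_mem_iff ht).2 hr, ?_⟩
          rw [size_append, size_append, hn, hm]
          lia
        · rintro i j t t' _ _ ⟨ht, hi⟩ ⟨ht', hj⟩ ⟨_, rfl, r, -, rfl⟩ ⟨_, rfl, r', -, rfl⟩ h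
          obtain ⟨rfl, rfl⟩ := eq_and_eq_of_append_cons_eq (fun hmem ↦ hy (ht y hmem))
            (fun hmem ↦ hy (ht' y hmem)) h
          exact ⟨Fin.ext (by lia), rfl, rfl⟩

lemma HasChain.exists_le_genFun (hg : 0 < g) (hg1 : g ≤ 1) (hS : W.IsLower S)
    (h : W.HasChain g k S) : ∃ n₀, ∃ c ≠ 0, ∀ n,
      c * (n + k).choose k ≤ W.genFun g (W.ofSize S (n + n₀)) := by
  have hpow (n : ℕ) : ENNReal.ofReal g ^ n ≠ 0 := pow_ne_zero _ (ENNReal.ofReal_pos.2 hg).ne'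
  induction k generalizing S with
  | zero =>
    obtain ⟨u, hdom⟩ := h
    refine ⟨W.size u, ENNReal.ofReal g ^ W.size u * ENNReal.ofReal g ^ W.maxSize,
      mul_ne_zero (hpow _) (hpow _), fun n ↦ ?_⟩
    simp only [Nat.choose_zero_right, Nat.cast_one, mul_one]
    refine _root_.le_trans ?_ (mul_genFun_ofSize_leftQuotient_le u n)
    gcongr
    refine (hdom.le_genFun_ofSize hg.le hg1 (hS.leftQuotient u) n).trans
      (genFun_mono (ofSize_mono (fun w hw ↦ ?_) n))
    exact w.append_nil ▸ (append_mem_iff hw).2 hdom.1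
  | succ k ih =>
    obtain ⟨u, hdom, y, hy, h⟩ := h
    obtain ⟨n₀, c, hc, hle⟩ := ih ((hS.leftQuotient u).leftQuotient [y]) h
    set T := S.leftQuotient u
    refine ⟨n₀ + W.size [y] + W.size u, ENNReal.ofReal g ^ W.size u *
      (ENNReal.ofReal g ^ W.maxSize * (ENNReal.ofReal g ^ W.size [y] * c)),
      by simp [hc, hg], fun n ↦ ?_⟩
    calc _ = ENNReal.ofReal g ^ W.size u * ∑ i : Fin (n + 1), ENNReal.ofReal g ^ W.maxSize *
          (ENNReal.ofReal g ^ W.size [y] * (c * (i + k).choose k)) := by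
          rw [Fin.sum_univ_eq_sum_range fun i ↦ ENNReal.ofReal g ^ W.maxSize *
            (ENNReal.ofReal g ^ W.size [y] * (c * (i + k).choose k)), ← add_assoc n,
            ← Nat.sum_range_add_choose]
          push_cast
          simp only [Finset.mul_sum, mul_assoc]
      _ ≤ ENNReal.ofReal g ^ W.size u * W.genFun g (W.ofSize T (n + (n₀ + W.size [y]))) := by
          gcongr
          refine (Finset.sum_le_sum fun i _ ↦ ?_).trans (sum_genFun_words_mul_le hy n n₀)
          gcongr
          · exact hdom.le_genFun_ofSize hg.le hg1 (hS.leftQuotient u) _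
          · exact hle i
      _ ≤ _ := (mul_genFun_ofSize_leftQuotient_le u _).trans_eq (by rw [add_assoc])

end LowerBounds

section Counting

variable {Λ : Type*} {W : WordOrder Λ} {g : ℝ} {A S : Language Λ} {k : ℕ}

/-- The number of words of size `n` in `A`. -/
noncomputable def count (W : WordOrder Λ) (A : Language Λ) (n : ℕ) : ℕ :=
  Set.ncard {w | w ∈ W.ofSize A n}

lemma finite_ofSize [Finite Λ] (W : WordOrder Λ) (A : Language Λ) (n : ℕ) :
    {w | w ∈ W.ofSize A n}.Finite :=
  (List.finite_length_le Λ n).subset fun w hw ↦ (W.length_le_size w).trans_eq hw.2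

lemma genFun_ofSize [Finite Λ] (hg : 0 ≤ g) (A : Language Λ) (n : ℕ) :
    W.genFun g (W.ofSize A n) = ENNReal.ofReal (W.count A n * g ^ n) := by
  calc W.genFun g (W.ofSize A n)
      = ∑' _ : {w | w ∈ W.ofSize A n}, ENNReal.ofReal g ^ n :=
        tsum_congr fun w ↦ by rw [w.2.2]
    _ = ENNReal.ofReal (W.count A n * g ^ n) := by
        rw [ENNReal.tsum_set_const, ← (W.finite_ofSize A n).cast_ncard_eq,
          ENNReal.ofReal_mul (Nat.cast_nonneg _), ENNReal.ofReal_natCast, ENNReal.ofReal_pow hg]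
        rfl

lemma HasPoleLE.isLittleO [Finite Λ] (hg : 0 ≤ g) (h : W.HasPoleLE g k A) :
    (fun n ↦ W.count A n * g ^ n) =o[atTop] fun n ↦ (n : ℝ) ^ k := by
  have hnonneg (n : ℕ) : 0 ≤ W.count A n * g ^ n := by positivity
  cases k with
  | zero =>
    have hsum := ne_top_of_le_ne_top h (tsum_genFun_ofSize_le A)
    have htendsto := (ENNReal.tendsto_toReal ENNReal.zero_ne_top).comp
      (ENNReal.tendsto_atTop_zero_of_tsum_ne_top hsum)
    simpa only [pow_zero, isLittleO_one_iff, Function.comp_def, genFun_ofSize hg,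
      ENNReal.toReal_ofReal (hnonneg _), ENNReal.toReal_zero] using htendsto
  | succ k =>
    obtain ⟨c, hc, h⟩ := h
    have hbound : (fun n ↦ W.count A n * g ^ n) =O[atTop] fun n : ℕ ↦ ((n : ℝ) + 1) ^ k := by
      refine .of_bound c.toReal (.of_forall fun n ↦ ?_)
      have := ENNReal.toReal_mono (by finiteness) (h n)
      rw [genFun_ofSize hg, ENNReal.toReal_ofReal (hnonneg n)] at this
      rw [Real.norm_of_nonneg (hnonneg n), Real.norm_of_nonneg (by positivity)]
      rwa [ENNReal.toReal_mul, ENNReal.toReal_pow, ENNReal.toReal_add (by simp) (by simp)] at this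
    have hadd : (fun n : ℕ ↦ (n : ℝ) + 1) =O[atTop] fun n : ℕ ↦ (n : ℝ) :=
      (isBigO_refl _ _).add (isLittleO_const_left.2 (.inr
        (tendsto_norm_atTop_atTop.comp tendsto_natCast_atTop_atTop))).isBigO
    exact (hbound.trans (hadd.pow k)).trans_isLittleO
      ((isLittleO_pow_pow_atTop_of_lt k.lt_succ_self).comp_tendsto tendsto_natCast_atTop_atTop)

lemma HasChain.isBigO [Fintype Λ] (hg : 0 < g) (hg1 : g ≤ 1) (hS : W.IsLower S)
    (h : W.HasChain g k S) :
    (fun n : ℕ ↦ (n : ℝ) ^ k) =O[atTop] fun n ↦ W.count S n * g ^ n := by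
  obtain ⟨n₀, c, hc, hle⟩ := h.exists_le_genFun hg hg1 hS
  simp only [genFun_ofSize hg.le] at hle
  have hc' : c ≠ ⊤ := ne_top_of_le_ne_top ENNReal.ofReal_ne_top
    (by simpa only [zero_add, Nat.choose_self, Nat.cast_one, mul_one] using hle 0)
  have hcpos : 0 < c.toReal := ENNReal.toReal_pos hc hc'
  rw [← map_add_atTop_eq_nat n₀, isBigO_map]
  refine .of_bound ((n₀ + 1) ^ k * k.factorial / c.toReal) (.of_forall fun n ↦ ?_)
  have hcount : c.toReal * (n + k).choose k ≤ W.count S (n + n₀) * g ^ (n + n₀) := by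
    have := ENNReal.toReal_mono ENNReal.ofReal_ne_top (hle n)
    rwa [ENNReal.toReal_ofReal (by positivity), ENNReal.toReal_mul, ENNReal.toReal_natCast] at this
  have hchoose : ((n : ℝ) + 1) ^ k ≤ k.factorial * (n + k).choose k := by
    have := Nat.pow_le_choose (α := ℝ) k (n + k)
    rw [div_le_iff₀' (by positivity), show n + k + 1 - k = n + 1 by lia] at this
    exact_mod_cast this
  simp only [Function.comp_apply]
  rw [Real.norm_of_nonneg (by positivity), Real.norm_of_nonneg (by positivity)]
  calc ((n + n₀ : ℕ) : ℝ) ^ k ≤ ((n₀ + 1) * (n + 1)) ^ k := by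
        gcongr
        push_cast
        nlinarith [n.cast_nonneg (α := ℝ), n₀.cast_nonneg (α := ℝ)]
    _ ≤ (n₀ + 1) ^ k * (k.factorial * (n + k).choose k) := by
        rw [mul_pow]
        gcongr
    _ = (n₀ + 1) ^ k * k.factorial / c.toReal * (c.toReal * (n + k).choose k) := by
        field_simp
    _ ≤ _ := by gcongr

end Counting

section Growth

variable {Λ : Type*} {W : WordOrder Λ} {g : ℝ} {C : Language Λ} {k : ℕ}

lemma exists_weight_eq_one {L : Finset Λ} (hg : 0 ≤ g) (hL : 1 < W.weight g L) :
    ∃ x, 0 < x ∧ x < g ∧ W.weight x L = 1 := by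
  have hcont : ContinuousOn (fun x ↦ W.weight x L) (Set.Icc 0 g) := by
    unfold weight
    fun_prop
  have hzero : W.weight 0 L = 0 := Finset.sum_eq_zero fun a _ ↦ zero_pow (W.sz_pos a).ne'
  obtain ⟨x, ⟨hx, hxg⟩, hxL⟩ :=
    intermediate_value_Ioo hg hcont ⟨hzero.trans_lt zero_lt_one, hL⟩
  exact ⟨x, hx, hxg, hxL⟩

lemma weight_loops_le_one [Fintype Λ] (hg : 0 < g) (hg1 : g ≤ 1) (hC : W.IsLower C)
    (h : (fun n ↦ W.count C n * g ^ n) =O[atTop] fun n ↦ (n : ℝ) ^ k) {u : List Λ}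
    (hu : [] ∈ C.leftQuotient u) : W.weight g (loops (C.leftQuotient u)) ≤ 1 := by
  by_contra! hlt
  obtain ⟨x, hx, hxg, hweight⟩ := exists_weight_eq_one hg.le hlt
  have hchain : W.HasChain x 0 C := ⟨u, hu, hweight⟩
  have hratio : ‖x / g‖ < 1 := by
    rwa [Real.norm_of_nonneg (by positivity), div_lt_one hg]
  have hcount : (fun n ↦ W.count C n * x ^ n) =O[atTop] fun n ↦ (n : ℝ) ^ k * (x / g) ^ n := by
    refine (h.mul (isBigO_refl (fun n ↦ (x / g) ^ n) atTop)).congr_left fun n ↦ ?_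
    rw [mul_assoc, ← mul_pow, mul_div_cancel₀ _ hg.ne']
  have hone := (hchain.isBigO hx (hxg.le.trans hg1) hC).trans_isLittleO <| hcount.trans_isLittleO <|
    isLittleO_pow_const_mul_const_pow_const_pow_of_norm_lt k hratio
  simp only [pow_zero, one_pow] at hone
  exact isLittleO_irrefl (.of_forall fun _ ↦ one_ne_zero) hone

lemma not_hasChain_succ [Fintype Λ] (hg : 0 < g) (hg1 : g ≤ 1) (hC : W.IsLower C)
    (h : (fun n ↦ W.count C n * g ^ n) =O[atTop] fun n ↦ (n : ℝ) ^ k) :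
    ¬ W.HasChain g (k + 1) C := fun hchain ↦ by
  have hlt : (fun n : ℕ ↦ (n : ℝ) ^ k) =o[atTop] fun n : ℕ ↦ (n : ℝ) ^ (k + 1) :=
    (isLittleO_pow_pow_atTop_of_lt k.lt_succ_self).comp_tendsto tendsto_natCast_atTop_atTop
  refine isLittleO_irrefl ?_ (((hchain.isBigO hg hg1 hC).trans h).trans_isLittleO hlt)
  refine Eventually.frequently ?_
  filter_upwards [eventually_ge_atTop 1] with n hn
  positivity

theorem exists_isLittleO_and_wilfEquiv [Finite Λ] (hg : 0 < g) (hg1 : g < 1) (hC : W.IsLower C)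
    (h : (fun n ↦ W.count C n * g ^ n) =Θ[atTop] fun n ↦ (n : ℝ) ^ k) (K : ℕ) :
    ∃ B : Language Λ,
      ((fun n ↦ (W.count B n : ℝ)) =o[atTop] fun n ↦ (W.count C n : ℝ)) ∧
      ∀ α ∈ C, α ∉ B → ∃ f : ℕ → List Λ, f.Injective ∧
        ∀ j ≤ K, f j ∈ C ∧ W.size (f j) = W.size α ∧ W.WilfEquiv C (f j) α := by
  have := Fintype.ofFinite Λ
  obtain ⟨N, hN⟩ := hC.exists_forall_traps
  have hweight (u : List Λ) (hu : [] ∈ C.leftQuotient u) :=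
    weight_loops_le_one hg hg1.le hC h.isBigO hu
  have htame : W.IsTame g N C := ⟨hg, hC, hweight, hN⟩
  have hpole : W.HasPoleLE g k (W.badWords g (W.swapBlock K N) k C) :=
    hasPoleLE_badWords hg hC hweight (fun _ _ ↦ mem_of_mem_swapBlock)
      (fun L hL ↦ swapBlock_ne_nil (nonempty_of_weight_eq_one hL)) k
  refine ⟨W.badWords g (W.swapBlock K N) k C, ?_, fun α hα hbad ↦ ?_⟩
  · have hlittle := ((hpole.isLittleO hg.le).trans_isBigO h.symm.isBigO).mul_isBigO
      (isBigO_refl (fun n ↦ (g ^ n)⁻¹) atTop)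
    simpa only [mul_inv_cancel_right₀ (pow_ne_zero _ hg.ne')] using hlittle
  · exact FollowsChain.exists_wilfEquiv htame hg1 (not_hasChain_succ hg hg1.le hC h.isBigO) hα
      (not_not.1 fun hfol ↦ hbad ⟨hα, hfol⟩)

end Growth

end WordOrder

/-! ### Permutations as words -/

section Permutation

variable {π τ α β a b c d : PPerm}

/-- The value of `π` at the position `i`, counted from `0`; positions outside `π` are fixed. -/
def entry (π : PPerm) (i : ℕ) : ℕ := if h : i < π.1 then (π.2 ⟨i, h⟩ : ℕ) else i

/-- The permutation of size `0`. -/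
def emptyPerm : PPerm := ⟨0, 1⟩

/-- The permutation of size `1`. -/
def singletonPerm : PPerm := ⟨1, 1⟩

lemma entry_lt {i : ℕ} (h : i < π.1) : entry π i < π.1 := by
  rw [entry, dif_pos h]
  exact (π.2 ⟨i, h⟩).2

lemma entry_val (π : PPerm) (i : Fin π.1) : entry π i = (π.2 i : ℕ) := dif_pos i.2

lemma injOn_entry (π : PPerm) : Set.InjOn (entry π) (Set.Iio π.1) := by
  intro i (hi : i < π.1) j (hj : j < π.1) hij
  rw [entry, dif_pos hi, entry, dif_pos hj, Fin.val_inj, π.2.injective.eq_iff] at hij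
  exact congrArg Fin.val hij

lemma eq_of_entry_eq (h : π.1 = τ.1) (h' : ∀ i < π.1, entry π i = entry τ i) : π = τ := by
  obtain ⟨n, σ⟩ := π
  obtain ⟨_, ρ⟩ := τ
  obtain rfl : n = _ := h
  refine congrArg (Sigma.mk n) (Equiv.ext fun i ↦ Fin.ext ?_)
  simpa only [entry_val ⟨n, _⟩ i] using h' i i.2

lemma eq_of_size_eq_one (hα : α.1 = 1) (hβ : β.1 = 1) : α = β :=
  eq_of_entry_eq (hα.trans hβ.symm) fun i hi ↦ by
    have := entry_lt hi
    have := entry_lt (π := β) (i := i) (by lia)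
    lia

lemma eq_emptyPerm (h : π.1 = 0) : π = emptyPerm :=
  eq_of_entry_eq h fun i hi ↦ by lia

lemma finite_setOf_size_eq (n : ℕ) : {τ : PPerm | τ.1 = n}.Finite :=
  (Set.finite_range (Sigma.mk (β := fun n ↦ Equiv.Perm (Fin n)) n)).subset <| by
    rintro ⟨_, σ⟩ rfl
    exact ⟨σ, rfl⟩

section Containment

lemma patternLE_iff : PatternLE π τ ↔ ∃ g : ℕ → ℕ, (∀ i < π.1, g i < τ.1) ∧
    (∀ j < π.1, ∀ i < j, g i < g j) ∧
      ∀ i < π.1, ∀ j < π.1, (entry π i < entry π j ↔ entry τ (g i) < entry τ (g j)) := by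
  constructor
  · rintro ⟨g, hg, hg'⟩
    refine ⟨fun i ↦ if h : i < π.1 then g ⟨i, h⟩ else 0, fun i hi ↦ ?_, fun j hj i hij ↦ ?_,
      fun i hi j hj ↦ ?_⟩
    · simp [hi]
    · simpa [hj, hij.trans hj] using @hg ⟨i, _⟩ ⟨j, _⟩ hij
    · simpa [hi, hj, entry] using hg' ⟨i, hi⟩ ⟨j, hj⟩
  · rintro ⟨g, hlt, hg, hg'⟩
    refine ⟨fun i ↦ ⟨g i, hlt i i.2⟩, fun i j hij ↦ hg j j.2 i hij, fun i j ↦ ?_⟩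
    simpa [entry, hlt] using hg' i i.2 j j.2

lemma PatternLE.refl (π : PPerm) : PatternLE π π := ⟨id, strictMono_id, fun _ _ ↦ Iff.rfl⟩

lemma PatternLE.trans (hab : PatternLE a b) (hbc : PatternLE b c) : PatternLE a c := by
  obtain ⟨f, hf, hf'⟩ := hab
  obtain ⟨g, hg, hg'⟩ := hbc
  exact ⟨g ∘ f, hg.comp hf, fun i j ↦ (hf' i j).trans (hg' _ _)⟩

lemma PatternLE.size_le (h : PatternLE a b) : a.1 ≤ b.1 := by
  obtain ⟨g, hg, -⟩ := h
  simpa using Fintype.card_le_of_injective g hg.injective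

lemma eq_id_of_strictMono {n : ℕ} {f : Fin n → Fin n} (hf : StrictMono f) : f = id :=
  congrArg (⇑) (Subsingleton.elim (hf.orderIsoOfSurjective f
    (Finite.surjective_of_injective hf.injective)) (OrderIso.refl _))

lemma PatternLE.eq_of_size_eq (h : PatternLE a b) (hsize : a.1 = b.1) : a = b := by
  obtain ⟨n, σ⟩ := a
  obtain ⟨_, ρ⟩ := b
  obtain rfl : n = _ := hsize
  obtain ⟨g, hg, hσρ⟩ := h
  obtain rfl := eq_id_of_strictMono hg
  have hmono : StrictMono (ρ ∘ σ.symm) := fun x y hxy ↦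
    (hσρ (σ.symm x) (σ.symm y)).1 (by simpa using hxy)
  refine congrArg (Sigma.mk n) (Equiv.ext fun i ↦ ?_)
  simpa using (congrFun (eq_id_of_strictMono hmono) (σ i)).symm

lemma emptyPerm_patternLE (π : PPerm) : PatternLE emptyPerm π :=
  ⟨Fin.elim0, fun i ↦ i.elim0, fun i ↦ i.elim0⟩

lemma singletonPerm_patternLE (h : 0 < π.1) : PatternLE singletonPerm π :=
  ⟨fun _ ↦ ⟨0, h⟩, fun i j hij ↦ absurd hij (Subsingleton.elim (α := Fin 1) i j ▸ lt_irrefl i),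
    fun i j ↦ by simp [Subsingleton.elim (α := Fin 1) i j]⟩

end Containment

section Sum

@[simp] lemma size_psum (a b : PPerm) : (psum a b).1 = a.1 + b.1 := rfl

lemma entry_psum (a b : PPerm) (i : ℕ) :
    entry (psum a b) i = if i < a.1 then entry a i else a.1 + entry b (i - a.1) := by
  by_cases hi : i < (psum a b).1
  · lift i to Fin (a.1 + b.1) using hi
    refine i.addCases (fun i ↦ ?_) fun i ↦ ?_
    · have h : (psum a b).2 (Fin.castAdd b.1 i) =
          finSumFinEquiv (Sum.map a.2 b.2 (finSumFinEquiv.symm (Fin.castAdd b.1 i))) := rfl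
      simpa [entry_val] using (entry_val (psum a b) _).trans (congrArg Fin.val h)
    · have h : (psum a b).2 (Fin.natAdd a.1 i) =
          finSumFinEquiv (Sum.map a.2 b.2 (finSumFinEquiv.symm (Fin.natAdd a.1 i))) := rfl
      simpa [entry_val] using (entry_val (psum a b) _).trans (congrArg Fin.val h)
  · have : ¬ i < a.1 + b.1 := hi
    rw [entry, dif_neg hi, if_neg (by lia), entry, dif_neg (by lia)]
    lia

lemma psum_emptyPerm (a : PPerm) : psum a emptyPerm = a :=
  eq_of_entry_eq (π := psum a emptyPerm) rfl fun i (hi : i < a.1) ↦ by rw [entry_psum, if_pos hi]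

lemma emptyPerm_psum (a : PPerm) : psum emptyPerm a = a :=
  eq_of_entry_eq (by simp [emptyPerm]) fun i _ ↦ by simp [entry_psum, emptyPerm]

lemma psum_assoc (a b c : PPerm) : psum (psum a b) c = psum a (psum b c) :=
  eq_of_entry_eq (by simp [add_assoc]) fun i _ ↦ by
    simp only [entry_psum, size_psum, Nat.sub_add_eq]
    grind

lemma psum_inj (h : psum a b = psum c d) (hac : a.1 = c.1) : a = c ∧ b = d := by
  have hsize : a.1 + b.1 = c.1 + d.1 := congrArg Sigma.fst h
  have hentry (i : ℕ) := congrArg (entry · i) h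
  simp only [entry_psum] at hentry
  refine ⟨eq_of_entry_eq hac fun i hi ↦ ?_, eq_of_entry_eq (by lia) fun i _ ↦ ?_⟩
  · simpa [hi, ← hac] using hentry i
  · simpa [← hac] using hentry (a.1 + i)

lemma psum_patternLE_psum (hac : PatternLE a c) (hbd : PatternLE b d) :
    PatternLE (psum a b) (psum c d) := by
  obtain ⟨f, hfc, hf, hf'⟩ := patternLE_iff.1 hac
  obtain ⟨g, hgd, hg, hg'⟩ := patternLE_iff.1 hbd
  have hsplit {i : ℕ} (hi : i < a.1 + b.1) : i < a.1 ∨ ∃ k < b.1, i = a.1 + k :=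
    (lt_or_ge i a.1).imp_right fun h ↦ ⟨i - a.1, by lia, by lia⟩
  refine patternLE_iff.2 ⟨fun i ↦ if i < a.1 then f i else c.1 + g (i - a.1), fun i hi ↦ ?_,
    fun j hj i hij ↦ ?_, fun i hi j hj ↦ ?_⟩
  · obtain hi | ⟨i, hi', rfl⟩ := hsplit hi
    · simpa [hi] using Nat.lt_add_right _ (hfc i hi)
    · simpa using hgd i hi'
  · obtain hi | ⟨i, -, rfl⟩ := hsplit (hij.trans hj) <;>
      obtain hj | ⟨j, hj', rfl⟩ := hsplit hj
    · simpa [hi, hj] using hf j hj i hij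
    · simpa [hi] using Nat.lt_add_right _ (hfc i hi)
    · lia
    · simpa using hg j hj' i (by lia)
  · obtain hi | ⟨i, hi', rfl⟩ := hsplit hi <;> obtain hj | ⟨j, hj', rfl⟩ := hsplit hj <;>
      simp only [entry_psum]
    · simpa [hi, hj, hfc] using hf' i hi j hj
    · have := entry_lt hi
      have := entry_lt (hfc i hi)
      simp only [hi, ↓reduceIte, add_lt_iff_neg_left, not_lt_zero, add_tsub_cancel_left, hfc]
      lia
    · have := entry_lt hj
      have := entry_lt (hfc j hj)
      simp only [add_lt_iff_neg_left, not_lt_zero, ↓reduceIte, add_tsub_cancel_left, hj, hfc]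
      lia
    · simpa using hg' i hi' j hj'

lemma patternLE_psum_left (a b : PPerm) : PatternLE a (psum a b) := by
  simpa only [psum_emptyPerm] using psum_patternLE_psum (.refl a) (emptyPerm_patternLE b)

lemma patternLE_psum_right (a b : PPerm) : PatternLE b (psum a b) := by
  simpa only [emptyPerm_psum] using psum_patternLE_psum (emptyPerm_patternLE a) (.refl b)

lemma exists_threshold {g : ℕ → ℕ} {n : ℕ} (hg : ∀ j < n, ∀ i < j, g i < g j) (c : ℕ) :
    ∃ k ≤ n, (∀ i < k, g i < c) ∧ ∀ i < n, k ≤ i → c ≤ g i := by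
  classical
  have hex : ∃ k, ∀ i < n, k ≤ i → c ≤ g i := ⟨n, fun i hi hi' ↦ absurd hi hi'.not_gt⟩
  refine ⟨Nat.find hex, Nat.find_min' hex fun i hi hi' ↦ absurd hi hi'.not_gt, fun i hi ↦ ?_,
    Nat.find_spec hex⟩
  obtain ⟨j, hj, hij, hjc⟩ := by simpa using Nat.find_min hex hi
  obtain rfl | hij := hij.eq_or_lt
  · exact hjc
  · exact (hg j hj i hij).trans hjc

lemma exists_eq_psum_of_mapsTo {k : ℕ} (hk : k ≤ π.1) (h : ∀ i < k, entry π i < k) :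
    ∃ a b, a.1 = k ∧ π = psum a b := by
  obtain ⟨n, σ⟩ := π
  obtain ⟨m, rfl⟩ := Nat.exists_eq_add_of_le hk
  have hlt (i : Fin k) : (σ (Fin.castAdd m i) : ℕ) < k :=
    entry_val ⟨_, σ⟩ (Fin.castAdd m i) ▸ h i i.2
  have hmaps : Set.MapsTo (finSumFinEquiv.symm.permCongr σ) (Set.range Sum.inl)
      (Set.range Sum.inl) := by
    rintro _ ⟨i, rfl⟩
    exact ⟨(σ (Fin.castAdd m i)).castLT (hlt i), finSumFinEquiv.injective (by simp)⟩
  obtain ⟨⟨a, b⟩, hab⟩ := Equiv.Perm.mem_sumCongrHom_range_of_perm_mapsTo_inl hmaps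
  refine ⟨⟨k, a⟩, ⟨m, b⟩, rfl, congrArg (Sigma.mk _) ?_⟩
  exact finSumFinEquiv.symm.permCongr.injective (hab.symm.trans (by ext x; simp))

lemma exists_eq_psum_of_lt {k : ℕ} (hk : k ≤ π.1)
    (h : ∀ i < k, ∀ j < π.1, k ≤ j → entry π i < entry π j) : ∃ a b, a.1 = k ∧ π = psum a b := by
  refine exists_eq_psum_of_mapsTo hk fun i hi ↦ ?_
  have hcard := Finset.card_le_card_of_injOn (s := Finset.Ico k π.1)
    (t := Finset.Ioo (entry π i) π.1) (entry π) (fun j hj ↦ by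
      obtain ⟨hkj, hj⟩ := Finset.mem_Ico.1 hj
      exact Finset.mem_Ioo.2 ⟨h i hi j hj hkj, entry_lt hj⟩)
    ((injOn_entry π).mono fun j hj ↦ (Finset.mem_Ico.1 hj).2)
  have := entry_lt (hi.trans_le hk)
  simp only [Nat.card_Ico, Nat.card_Ioo] at hcard
  lia

lemma exists_eq_psum_of_psum_eq (h : psum a b = psum c d) (hac : a.1 ≤ c.1) :
    ∃ e, c = psum a e ∧ b = psum e d := by
  obtain ⟨a', e, ha, rfl⟩ := exists_eq_psum_of_mapsTo hac fun i hi ↦ by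
    have hentry := congrArg (entry · i) h
    simp only [entry_psum, hi, hi.trans_le hac, if_true] at hentry
    exact hentry ▸ entry_lt hi
  rw [psum_assoc] at h
  obtain ⟨rfl, hb⟩ := psum_inj h ha.symm
  exact ⟨e, rfl, hb⟩

lemma PatternLE.exists_eq_psum (h : PatternLE a (psum c d)) :
    ∃ a₁ a₂, a = psum a₁ a₂ ∧ PatternLE a₁ c ∧ PatternLE a₂ d := by
  obtain ⟨g, hlt, hg, hg'⟩ := patternLE_iff.1 h
  obtain ⟨k, hk, hkc, hkd⟩ : ∃ k ≤ a.1, (∀ i < k, g i < c.1) ∧ ∀ i < a.1, k ≤ i → c.1 ≤ g i :=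
    exists_threshold hg c.1
  obtain ⟨a₁, a₂, rfl, rfl⟩ := exists_eq_psum_of_lt hk fun i hi j hj hkj ↦ by
    have := entry_lt (hkc i hi)
    rw [hg' i (hi.trans_le hk) j hj, entry_psum, if_pos (hkc i hi), entry_psum,
      if_neg (hkd j hj hkj).not_gt]
    lia
  simp only [size_psum] at hlt hg hg' hkd
  have hge (i) (hi : i < a₂.1) : c.1 ≤ g (a₁.1 + i) := hkd _ (by lia) (by lia)
  refine ⟨a₁, a₂, rfl, patternLE_iff.2 ⟨g, hkc, fun j hj ↦ hg j (by lia), fun i hi j hj ↦ ?_⟩,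
    patternLE_iff.2 ⟨fun i ↦ g (a₁.1 + i) - c.1, fun i hi ↦ ?_, fun j hj i hij ↦ ?_,
      fun i hi j hj ↦ ?_⟩⟩
  · simpa [entry_psum, hi, hj, hkc] using hg' i (by lia) j (by lia)
  · have := hlt (a₁.1 + i) (by lia)
    have := hge i hi
    lia
  · have := hg (a₁.1 + j) (by lia) (a₁.1 + i) (by lia)
    have := hge i (hij.trans hj)
    lia
  · simpa [entry_psum, (hge i hi).not_gt, (hge j hj).not_gt] using
      hg' (a₁.1 + i) (by lia) (a₁.1 + j) (by lia)

lemma SumIndec.exists_eq_psum (ha : SumIndec a) (h : psum a b = psum c d) (hc : 0 < c.1) :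
    ∃ e, c = psum a e ∧ b = psum e d := by
  obtain hac | hca := le_or_gt a.1 c.1
  · exact exists_eq_psum_of_psum_eq h hac
  · obtain ⟨e, rfl, -⟩ := exists_eq_psum_of_psum_eq h.symm hca.le
    exact absurd ⟨c, e, hc, by simpa using hca, rfl⟩ ha.2

lemma SumIndec.psum_inj (ha : SumIndec a) (hc : SumIndec c) (h : psum a b = psum c d) :
    a = c ∧ b = d := by
  obtain ⟨e, he, -⟩ := ha.exists_eq_psum h hc.1
  obtain ⟨e', he', -⟩ := hc.exists_eq_psum h.symm ha.1
  have hsize := congrArg Sigma.fst he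
  have hsize' := congrArg Sigma.fst he'
  exact _root_.psum_inj h (by simp only [size_psum] at hsize hsize'; lia)

lemma sumIndec_singletonPerm : SumIndec singletonPerm := by
  refine ⟨one_pos, ?_⟩
  rintro ⟨α, β, hα, hβ, h⟩
  have hsize : 1 = α.1 + β.1 := congrArg Sigma.fst h
  lia

end Sum

section Word

variable {C : Set PPerm}

/-- The sum-indecomposables of `C`, the alphabet over which the permutations of `C` are read as
words. -/
abbrev Letter (C : Set PPerm) : Type := {π : PPerm // π ∈ C ∧ SumIndec π}

/-- The permutation encoded by a word over the sum-indecomposables of `C`. -/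
def wordSum (w : List (Letter C)) : PPerm := w.foldr (fun x p ↦ psum x.1 p) emptyPerm

lemma wordSum_cons (x : Letter C) (w : List (Letter C)) :
    wordSum (x :: w) = psum x.1 (wordSum w) := rfl

lemma wordSum_singleton (x : Letter C) : wordSum [x] = x.1 := psum_emptyPerm x.1

lemma wordSum_append (v w : List (Letter C)) :
    wordSum (v ++ w) = psum (wordSum v) (wordSum w) := by
  induction v with
  | nil => exact (emptyPerm_psum _).symm
  | cons x v ih => rw [List.cons_append, wordSum_cons, ih, wordSum_cons, psum_assoc]

lemma size_wordSum (w : List (Letter C)) : (wordSum w).1 = (w.map fun x ↦ x.1.1).sum := by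
  induction w with
  | nil => rfl
  | cons x w ih => rw [wordSum_cons, size_psum, ih, List.map_cons, List.sum_cons]

lemma wordSum_injective : (wordSum : List (Letter C) → PPerm).Injective := by
  intro v
  induction v with
  | nil =>
    rintro (_ | ⟨x, w⟩) h
    · rfl
    · have hsize : 0 = x.1.1 + (wordSum w).1 := congrArg Sigma.fst h
      have := x.2.2.1
      lia
  | cons x v ih =>
    rintro (_ | ⟨y, w⟩) h
    · have hsize : x.1.1 + (wordSum v).1 = 0 := congrArg Sigma.fst h
      have := x.2.2.1
      lia
    · obtain ⟨hxy, hvw⟩ := x.2.2.psum_inj y.2.2 h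
      rw [Subtype.ext hxy, ih hvw]

lemma exists_append_of_wordSum_eq_psum {w : List (Letter C)} (h : wordSum w = psum a b) :
    ∃ w₁ w₂, w = w₁ ++ w₂ ∧ wordSum w₁ = a ∧ wordSum w₂ = b := by
  induction w generalizing a with
  | nil =>
    have hsize : 0 = a.1 + b.1 := congrArg Sigma.fst h
    exact ⟨[], [], rfl, (eq_emptyPerm (by lia)).symm, (eq_emptyPerm (by lia)).symm⟩
  | cons x w ih =>
    obtain ha | ha := a.1.eq_zero_or_pos
    · obtain rfl := eq_emptyPerm ha
      exact ⟨[], x :: w, rfl, rfl, h.trans (emptyPerm_psum b)⟩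
    · obtain ⟨e, rfl, he⟩ := x.2.2.exists_eq_psum h ha
      obtain ⟨w₁, w₂, rfl, rfl, rfl⟩ := ih he
      exact ⟨x :: w₁, w₂, rfl, rfl, rfl⟩

lemma exists_wordSum_eq (hC : IsPermClass C) (hπ : π ∈ C) :
    ∃ w : List (Letter C), wordSum w = π := by
  induction hn : π.1 using Nat.strong_induction_on generalizing π with
  | h n ih =>
  obtain hπ0 | hπ0 := π.1.eq_zero_or_pos
  · exact ⟨[], (eq_emptyPerm hπ0).symm⟩
  by_cases hindec : SumIndec π
  · exact ⟨[⟨π, hπ, hindec⟩], wordSum_singleton _⟩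
  obtain ⟨α, β, hα, hβ, rfl⟩ := not_not.1 fun h ↦ hindec ⟨hπ0, h⟩
  rw [size_psum] at hn
  obtain ⟨v, rfl⟩ := ih α.1 (by lia) (hC _ _ (patternLE_psum_left α β) hπ) rfl
  obtain ⟨w, rfl⟩ := ih β.1 (by lia) (hC _ _ (patternLE_psum_right _ β) hπ) rfl
  exact ⟨v ++ w, wordSum_append v w⟩

/-- Pattern containment, read on words over the sum-indecomposables of a permutation class. -/
def permWordOrder (hC : IsPermClass C) : WordOrder (Letter C) where
  sz x := x.1.1
  le v w := PatternLE (wordSum v) (wordSum w)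
  le_refl _ := .refl _
  le_trans := .trans
  nil_le _ := emptyPerm_patternLE _
  le_cons_iff := by
    intro w x t
    constructor
    · intro h
      obtain ⟨a₁, a₂, ha, h₁, h₂⟩ := PatternLE.exists_eq_psum h
      obtain ⟨w₁, w₂, rfl, rfl, rfl⟩ := exists_append_of_wordSum_eq_psum ha
      exact ⟨w₁, w₂, rfl, by rwa [wordSum_singleton], h₂⟩
    · rintro ⟨w₁, w₂, rfl, h₁, h₂⟩
      rw [wordSum_singleton] at h₁
      rw [wordSum_append]
      exact psum_patternLE_psum h₁ h₂
  sum_sz_le h := by simpa only [size_wordSum] using PatternLE.size_le h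
  eq_of_sum_sz_eq h hsz := wordSum_injective <| PatternLE.eq_of_size_eq h <| by
    simpa only [size_wordSum] using hsz
  exists_unit_le x := by
    have h := singletonPerm_patternLE x.2.2.1
    exact ⟨⟨singletonPerm, hC _ _ h x.2.1, sumIndec_singletonPerm⟩, rfl,
      by simpa only [wordSum_singleton] using h⟩
  unit_unique h h' := Subtype.ext (eq_of_size_eq_one h h')

end Word

end Permutation

/-! ### Counting Wilf classes -/

section WilfClass

variable {C : Set PPerm}

/-- The Wilf class of `α` among the permutations of its size in `C`. -/
def wilfClass (C : Set PPerm) (α : PPerm) : Set PPerm := {β | β ∈ C ∧ β.1 = α.1 ∧ WilfEq C α β}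

lemma finite_setOf_mem_and_size_eq (C : Set PPerm) (n : ℕ) : {τ | τ ∈ C ∧ τ.1 = n}.Finite :=
  (finite_setOf_size_eq n).subset fun _ h ↦ h.2

lemma wilfcnt_eq_ncard_image (C : Set PPerm) (n : ℕ) :
    wilfcnt C n = (wilfClass C '' {τ | τ ∈ C ∧ τ.1 = n}).ncard := by
  refine congrArg Set.ncard (Set.ext fun S ↦ ⟨?_, ?_⟩)
  · rintro ⟨α, hα, rfl, rfl⟩
    exact ⟨α, ⟨hα, rfl⟩, rfl⟩
  · rintro ⟨α, ⟨hα, rfl⟩, rfl⟩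
    exact ⟨α, hα, rfl, rfl⟩

lemma wilfClass_eq_of_mem {α β : PPerm} (h : β ∈ wilfClass C α) :
    wilfClass C β = wilfClass C α := by
  obtain ⟨-, hsize, hαβ⟩ := h
  ext δ
  simp only [wilfClass, Set.mem_ofPred_eq, hsize, WilfEq] at hαβ ⊢
  simp only [hαβ]

lemma mul_ncard_image_wilfClass_le {k n : ℕ} {A : Set PPerm} (hA : A ⊆ {τ | τ ∈ C ∧ τ.1 = n})
    (h : ∀ α ∈ A, k ≤ (wilfClass C α).ncard) : k * (wilfClass C '' A).ncard ≤ cnt C n := by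
  classical
  have hfin := finite_setOf_mem_and_size_eq C n
  have himage := (hfin.subset hA).image (wilfClass C)
  rw [cnt, Set.ncard_eq_toFinset_card _ hfin, Set.ncard_eq_toFinset_card _ himage]
  refine (Finset.mul_card_image_le_card_of_maps_to (f := wilfClass C) (fun β hβ ↦
    (Finset.mem_filter.1 hβ).2) k ?_).trans (Finset.card_filter_le _ _)
  intro S hS
  obtain ⟨α, hα, rfl⟩ := himage.mem_toFinset.1 hS
  refine (h α hα).trans ?_
  rw [← Set.ncard_coe_finset]
  refine Set.ncard_le_ncard (fun β hβ ↦ ?_) (Finset.finite_toSet _)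
  have hclass := wilfClass_eq_of_mem hβ
  exact Finset.mem_filter.2 ⟨Finset.mem_filter.2
    ⟨hfin.mem_toFinset.2 ⟨hβ.1, hβ.2.1.trans (hA hα).2⟩, by rwa [hclass]⟩, hclass⟩

lemma mul_wilfcnt_le {k n : ℕ} {B : Set PPerm}
    (h : ∀ α ∈ C, α ∉ B → k ≤ (wilfClass C α).ncard) :
    k * wilfcnt C n ≤ k * cnt B n + cnt C n := by
  have hfin := finite_setOf_mem_and_size_eq B n
  have hfin' := finite_setOf_mem_and_size_eq C n
  have hsub : {τ | τ ∈ C ∧ τ.1 = n} ⊆ {τ | τ ∈ B ∧ τ.1 = n} ∪ {τ | τ ∈ C ∧ τ.1 = n ∧ τ ∉ B} := by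
    grind
  calc k * wilfcnt C n
      ≤ k * (wilfClass C '' {τ | τ ∈ B ∧ τ.1 = n} ∪
          wilfClass C '' {τ | τ ∈ C ∧ τ.1 = n ∧ τ ∉ B}).ncard := by
        rw [wilfcnt_eq_ncard_image, ← Set.image_union]
        gcongr
        exact ((hfin.union (hfin'.subset fun τ hτ ↦ ⟨hτ.1, hτ.2.1⟩)).image _)
    _ ≤ k * (cnt B n + (wilfClass C '' {τ | τ ∈ C ∧ τ.1 = n ∧ τ ∉ B}).ncard) := by
        gcongr
        exact (Set.ncard_union_le _ _).trans (by gcongr; exact Set.ncard_image_le hfin)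
    _ ≤ k * cnt B n + cnt C n := by
        rw [mul_add]
        gcongr
        exact mul_ncard_image_wilfClass_le (fun α hα ↦ ⟨hα.1, hα.2.1⟩) fun α hα ↦ h α hα.1 hα.2.2

theorem wilfCollapse_of_forall_exists
    (h : ∀ K : ℕ, ∃ B : Set PPerm, ((fun n ↦ (cnt B n : ℝ)) =o[atTop] fun n ↦ (cnt C n : ℝ)) ∧
      ∀ α ∈ C, α ∉ B → K + 1 ≤ (wilfClass C α).ncard) : WilfCollapse C := by
  refine isLittleO_iff.2 fun ε hε ↦ ?_
  obtain ⟨K, hK⟩ := exists_nat_one_div_lt (half_pos hε)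
  obtain ⟨B, hB, hclass⟩ := h K
  filter_upwards [isLittleO_iff.1 hB (half_pos hε)] with n hn
  have hcount : ((K + 1 : ℕ) : ℝ) * wilfcnt C n ≤ (K + 1 : ℕ) * cnt B n + cnt C n := by
    exact_mod_cast mul_wilfcnt_le hclass
  push_cast at hcount
  simp only [Real.norm_natCast] at hn ⊢
  have hK' : (0 : ℝ) < K + 1 := by positivity
  calc (wilfcnt C n : ℝ) ≤ cnt B n + 1 / (K + 1) * cnt C n := by
        refine le_of_mul_le_mul_left (hcount.trans_eq ?_) hK'
        field_simp
    _ ≤ ε / 2 * cnt C n + ε / 2 * cnt C n := by gcongr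
    _ = ε * cnt C n := by ring

end WilfClass

section Transfer

variable {C : Set PPerm}

/-- The words over the sum-indecomposables of `C` that encode permutations of `C`. -/
def wordsOf (C : Set PPerm) : Language (Letter C) := {w | wordSum w ∈ C}

lemma isLower_wordsOf (hC : IsPermClass C) : (permWordOrder hC).IsLower (wordsOf C) :=
  fun _ _ hab hb ↦ hC _ _ hab hb

lemma size_permWordOrder (hC : IsPermClass C) (w : List (Letter C)) :
    (permWordOrder hC).size w = (wordSum w).1 := (size_wordSum w).symm

lemma image_wordSum_wordsOf (hC : IsPermClass C) : wordSum '' wordsOf C = C := by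
  refine Set.image_preimage_eq_of_subset fun π hπ ↦ ?_
  exact exists_wordSum_eq hC hπ

lemma count_permWordOrder (hC : IsPermClass C) (A : Language (Letter C)) (n : ℕ) :
    (permWordOrder hC).count A n = cnt (wordSum '' A) n := by
  rw [WordOrder.count, cnt, ← Set.ncard_image_of_injective _ wordSum_injective]
  refine congrArg Set.ncard (Set.ext fun τ ↦ ⟨?_, ?_⟩)
  · rintro ⟨w, ⟨hw, rfl⟩, rfl⟩
    exact ⟨⟨w, hw, rfl⟩, (size_permWordOrder hC w).symm⟩
  · rintro ⟨⟨w, hw, rfl⟩, rfl⟩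
    exact ⟨w, ⟨hw, size_permWordOrder hC w⟩, rfl⟩

lemma avcnt_add_ncard_containing (hC : IsPermClass C) (w : List (Letter C)) (n : ℕ) :
    avcnt C (wordSum w) n + ((permWordOrder hC).containing (wordsOf C) w n).ncard = cnt C n := by
  have himage : wordSum '' (permWordOrder hC).containing (wordsOf C) w n =
      {τ | τ ∈ C ∧ τ.1 = n} ∩ {τ | PatternLE (wordSum w) τ} := by
    ext τ
    constructor
    · rintro ⟨v, ⟨hv, rfl, hle⟩, rfl⟩
      exact ⟨⟨hv, (size_permWordOrder hC v).symm⟩, hle⟩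
    · rintro ⟨⟨hτ, rfl⟩, hle⟩
      obtain ⟨v, rfl⟩ := exists_wordSum_eq hC hτ
      exact ⟨v, ⟨hτ, size_permWordOrder hC v, hle⟩, rfl⟩
  have havoid : {τ | τ ∈ C ∧ τ.1 = n ∧ ¬ PatternLE (wordSum w) τ} =
      {τ | τ ∈ C ∧ τ.1 = n} \ {τ | PatternLE (wordSum w) τ} := Set.ext fun _ ↦ and_assoc.symm
  rw [avcnt, havoid, ← Set.ncard_image_of_injective _ wordSum_injective, himage, add_comm, cnt]
  exact Set.ncard_inter_add_ncard_sdiff_eq_ncard _ _ (finite_setOf_mem_and_size_eq C n)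

lemma wilfEq_wordSum {hC : IsPermClass C} {v w : List (Letter C)}
    (h : (permWordOrder hC).WilfEquiv (wordsOf C) v w) : WilfEq C (wordSum v) (wordSum w) := by
  intro n
  have hv := avcnt_add_ncard_containing hC v n
  have hw := avcnt_add_ncard_containing hC w n
  have := h n
  lia

lemma le_ncard_wilfClass_wordSum {hC : IsPermClass C} {α : List (Letter C)}
    {f : ℕ → List (Letter C)} {K : ℕ} (hf : f.Injective)
    (h : ∀ j ≤ K, f j ∈ wordsOf C ∧ (permWordOrder hC).size (f j) = (permWordOrder hC).size α ∧
      (permWordOrder hC).WilfEquiv (wordsOf C) (f j) α) :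
    K + 1 ≤ (wilfClass C (wordSum α)).ncard := by
  rw [← Finset.card_range (K + 1), ← Set.ncard_coe_finset]
  refine Set.ncard_le_ncard_of_injOn (wordSum ∘ f) (fun j hj ↦ ?_)
    (wordSum_injective.comp hf).injOn
    ((finite_setOf_mem_and_size_eq C _).subset fun β hβ ↦ ⟨hβ.1, hβ.2.1⟩)
  obtain ⟨hmem, hsize, hwilf⟩ := h j (by simpa [Nat.lt_succ_iff] using hj)
  rw [size_permWordOrder, size_permWordOrder] at hsize
  exact ⟨hmem, hsize, fun n ↦ (wilfEq_wordSum hwilf n).symm⟩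

end Transfer

/-- **Proposition `pro-exp`.**  Any permutation class with finitely many
sum-indecomposable permutations whose (dominant) growth rate `γ` is greater than `1`
— equivalently, `c_n = Θ(n^{D−1}·γⁿ)` for some positive integer `D` and some `γ > 1`,
so that `γ` is the exponential growth rate of `C` — exhibits a Wilf collapse. -/
theorem expGrowth_wilfCollapse (C : Set PPerm)
    (hclass : IsPermClass C)
    (hfin : {π : PPerm | π ∈ C ∧ SumIndec π}.Finite)
    (D : ℕ) (hD : 0 < D) (γ : ℝ) (hγ : 1 < γ)
    (hΘ : (fun n => (cnt C n : ℝ)) =Θ[atTop] fun n => (n : ℝ) ^ (D - 1) * γ ^ n) :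
    WilfCollapse C := by
  have hΘ' : (fun n ↦ (permWordOrder hclass).count (wordsOf C) n * γ⁻¹ ^ n) =Θ[atTop]
      fun n : ℕ ↦ (n : ℝ) ^ (D - 1) := by
    have := hΘ.mul (isTheta_refl (fun n : ℕ ↦ γ⁻¹ ^ n) atTop)
    simpa [count_permWordOrder, image_wordSum_wordsOf hclass, mul_assoc, ← mul_pow,
      (one_pos.trans hγ).ne'] using this
  have : Finite (Letter C) := hfin
  refine wilfCollapse_of_forall_exists fun K ↦ ?_
  obtain ⟨B, hB, hswap⟩ := (permWordOrder hclass).exists_isLittleO_and_wilfEquiv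
    (inv_pos.2 (one_pos.trans hγ)) (inv_lt_one_of_one_lt₀ hγ) (isLower_wordsOf hclass) hΘ' K
  simp only [count_permWordOrder, image_wordSum_wordsOf hclass] at hB
  refine ⟨wordSum '' B, hB, fun α hα hαB ↦ ?_⟩
  obtain ⟨w, rfl⟩ := exists_wordSum_eq hclass hα
  obtain ⟨f, hf, hfw⟩ := hswap w hα fun hw ↦ hαB ⟨w, hw, rfl⟩
  exact le_ncard_wilfClass_wordSum hf hfw
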